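/- arXiv:2003.08581 — 3 statements merged into one kernel-verified Lean document; each statement's English description precedes it below -/
import Mathlib

section
/- Let ν₁ and ν₂ be non-negative random variables on (Ω,𝓕,ℙ) with 𝔼[ν₁^p + ν₂^p] < ∞ for some p > 1. Then there is a set Ω₂ ⊆ Ω of full ℙ-measure such that for every ω ∈ Ω₂, every η > 0, every locally bounded measurable f on ℝ^d and every bounded measurable compactly supported g on ℝ^d: lim_{ε→0} ∬_{{η<|x−y|<1/η, x−y∈Γ}} (f(y)−f(x))(g(y)−g(x))·|x−y|^{−(d+α)}·ν₁(τ_{x/ε}ω)ν₂(τ_{y/ε}ω) dx dy = 𝔼[ν₁]·𝔼[ν₂]·∬_{{η<|x−y|<1/η, x−y∈Γ}} (f(y)−f(x))(g(y)−g(x))·|x−y|^{−(d+α)} dx dy. -/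
open MeasureTheory Filter Metric Set
open scoped ENNReal Topology

noncomputable section

/-- Euclidean space `ℝ^d`. -/
abbrev Rd (d : ℕ) : Type := EuclideanSpace ℝ (Fin d)

/-!
Say that `φ` has weak mean `c` if its dilations `x ↦ φ (T • x)` converge weakly-* in `L∞` to `c` as
`T = 1 / ε → ∞`. If `φ` and `ψ` have weak means `c` and `k` then, integrating one variable at a
time, `φ x * ψ y` averages to `c * k` against every integrable kernel `F (x, y)`. Along every
orbit a bounded coboundary `a - a ∘ τ_z` has weak mean `0`, because translating by `z` costs only
`z / T` after dilation and translations are continuous in `L¹`. By von Neumann's argument, a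
vector of `L²(ℙ)` orthogonal to the constants and the coboundaries is invariant with mean zero,
hence zero by ergodicity; so sums of constants and coboundaries are dense in `L²(ℙ)`, and therefore
in `L¹(ℙ)`.

For an integrable `ν`, choose such sums `a n` converging to `ν` fast in `L¹(ℙ)`. The Vitali covering
lemma, transferred to `Ω` by integrating over base points, gives a weak type `(1, 1)` maximal
inequality, and Borel–Cantelli makes the averages of `|ν - a n|` over all balls of integer radius
tend to zero along almost every orbit. These averages control the error of replacing `ν₁ ν₂` by the
approximants for every bounded, boundedly supported kernel at once and uniformly in `ε`, so the
exceptional null set depends neither on `η` nor on `f` and `g`.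
-/

section Ergodic

variable {G Ω : Type*} [MeasurableSpace Ω] {ℙ : Measure Ω}

theorem ergodicVAdd_of_forall_preimage_vadd_eq [AddGroup G] [MeasurableSpace G] [MeasurableAdd G]
    [AddAction G Ω] [MeasurableVAdd₂ G Ω] [SFinite ℙ] [VAddInvariantMeasure G Ω ℙ]
    (ν : Measure G) [SFinite ν] [NeZero ν] [ν.IsAddRightInvariant]
    (h : ∀ A : Set Ω, MeasurableSet A → (∀ g : G, (g +ᵥ ·) ⁻¹' A = A) → ℙ A = 0 ∨ ℙ Aᶜ = 0) :
    ErgodicVAdd G Ω ℙ where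
  aeconst_of_forall_preimage_vadd_ae_eq {s} hs hinv := by
    -- The points whose orbit lies almost entirely in `s` form a strictly invariant version of `s`.
    set A : Set Ω := {ω | ∀ᵐ x ∂ν, x +ᵥ ω ∈ s} with hA
    have A_measurable : MeasurableSet A := by
      have hpre : MeasurableSet {p : Ω × G | p.2 +ᵥ p.1 ∉ s} :=
        (measurable_snd.vadd measurable_fst) hs.compl
      exact measurable_measure_prodMk_left hpre (measurableSet_singleton 0)
    have A_invariant (g : G) : (g +ᵥ ·) ⁻¹' A = A := by
      ext ω
      simp only [hA, mem_preimage, mem_ofPred_eq, vadd_vadd]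
      constructor <;> intro hω
      · simpa using (measurePreserving_add_right ν (-g)).quasiMeasurePreserving.ae hω
      · exact (measurePreserving_add_right ν g).quasiMeasurePreserving.ae hω
    have orbit_ae : ∀ᵐ ω ∂ℙ, ∀ᵐ x ∂ν, x +ᵥ ω ∈ s ↔ ω ∈ s := by
      have hset : MeasurableSet {p : G × Ω | p.1 +ᵥ p.2 ∈ s ↔ p.2 ∈ s} :=
        MeasurableSet.iff (measurable_vadd hs) (measurable_snd hs)
      exact (Measure.ae_ae_comm hset).1 (.of_forall fun g => (hinv g).mem_iff)
    have A_ae_eq : A =ᵐ[ℙ] s := by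
      filter_upwards [orbit_ae] with ω hω
      refine propext ⟨fun hωA => ?_, fun hωs => ?_⟩
      · obtain ⟨x, hx, hxs⟩ := (hω.and hωA).exists
        exact hx.1 hxs
      · filter_upwards [hω] with x hx using hx.2 hωs
    refine EventuallyConst.congr (eventuallyConst_set'.2 ?_) A_ae_eq
    exact (h A A_measurable A_invariant).imp ae_eq_empty.2 ae_eq_univ.2

theorem exists_ae_eq_const_of_forall_vadd_ae_eq [VAdd G Ω] [ErgodicVAdd G Ω ℙ] {X : Type*}
    [Nonempty X] [MeasurableSpace X] [MeasurableSpace.CountablySeparated X] {w : Ω → X}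
    (hw : NullMeasurable w ℙ) (hinv : ∀ g : G, (fun ω => w (g +ᵥ ω)) =ᵐ[ℙ] w) :
    ∃ c, w =ᵐ[ℙ] Function.const Ω c := by
  refine exists_eventuallyEq_const_of_forall_separating MeasurableSet fun U hU => ?_
  refine eventuallyConst_pred.1 (aeconst_of_forall_preimage_vadd_ae_eq G (hw hU) fun g => ?_)
  filter_upwards [hinv g] with ω hω
  exact congrArg (· ∈ U) hω

theorem Lp_eq_zero_of_forall_vadd_eq [AddGroup G] [AddAction G Ω] [MeasurableConstVAdd G Ω]
    [IsProbabilityMeasure ℙ] [ErgodicVAdd G Ω ℙ] {w : Lp ℝ 2 ℙ}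
    (hinv : ∀ g : G, DomAddAct.mk g +ᵥ w = w) (hmean : ∫ ω, w ω ∂ℙ = 0) : w = 0 := by
  obtain ⟨c, hc⟩ : ∃ c, w =ᵐ[ℙ] Function.const Ω c := by
    refine exists_ae_eq_const_of_forall_vadd_ae_eq (G := G)
      (Lp.aestronglyMeasurable w).aemeasurable.nullMeasurable fun g => ?_
    have := DomAddAct.vadd_Lp_ae_eq (DomAddAct.mk g) w
    rw [hinv] at this
    exact this.symm
  obtain rfl : c = 0 := by simpa [integral_congr_ae hc] using hmean
  exact Lp.eq_zero_iff_ae_eq_zero.2 hc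

theorem vadd_Lp_eq_of_inner_sub_vadd_eq_zero [AddGroup G] [AddAction G Ω] [MeasurableConstVAdd G Ω]
    [VAddInvariantMeasure G Ω ℙ] {w : Lp ℝ 2 ℙ} {g : Gᵈᵃᵃ}
    (h : inner ℝ w (w - (g +ᵥ w)) = 0) : g +ᵥ w = w := by
  have hnorm : ‖w - (g +ᵥ w)‖ ^ 2 = 2 * inner ℝ w (w - (g +ᵥ w)) := by
    rw [norm_sub_sq_real, inner_sub_right, DomAddAct.norm_vadd_Lp, real_inner_self_eq_norm_sq]
    ring
  rw [h, mul_zero, sq_eq_zero_iff, norm_eq_zero, sub_eq_zero] at hnorm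
  exact hnorm.symm

end Ergodic

section BallMaximal

variable {E : Type*} [SeminormedAddCommGroup E] [MeasurableSpace E]

/-- The maximal function at the origin of `φ : E → ℝ≥0∞`: the supremum of the averages of `φ` over
the centred balls of radius `1, 2, 3, …`. Small radii play no role in limits at infinite scale. -/
def ballMaximal (μ : Measure E) (φ : E → ℝ≥0∞) : ℝ≥0∞ :=
  ⨆ n : ℕ, ⨍⁻ x in closedBall 0 (n + 1), φ x ∂μ

variable {μ : Measure E}

theorem setLAverage_closedBall_le_ballMaximal (φ : E → ℝ≥0∞) (n : ℕ) :
    ⨍⁻ x in closedBall 0 (n + 1), φ x ∂μ ≤ ballMaximal μ φ :=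
  le_iSup (fun n : ℕ => ⨍⁻ x in closedBall 0 (n + 1), φ x ∂μ) n

theorem ballMaximal_mono {φ ψ : E → ℝ≥0∞} (h : φ ≤ ψ) : ballMaximal μ φ ≤ ballMaximal μ ψ :=
  iSup_mono fun _ => lintegral_mono h

theorem ballMaximal_add_le {φ : E → ℝ≥0∞} (hφ : Measurable φ) (ψ : E → ℝ≥0∞) :
    ballMaximal μ (φ + ψ) ≤ ballMaximal μ φ + ballMaximal μ ψ := by
  refine iSup_le fun n => ?_
  calc ⨍⁻ x in closedBall 0 (n + 1), (φ + ψ) x ∂μ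
    _ = (⨍⁻ x in closedBall 0 (n + 1), φ x ∂μ) + ⨍⁻ x in closedBall 0 (n + 1), ψ x ∂μ :=
        lintegral_add_left hφ _
    _ ≤ _ := add_le_add (setLAverage_closedBall_le_ballMaximal φ n)
        (setLAverage_closedBall_le_ballMaximal ψ n)

theorem ballMaximal_const_le (c : ℝ≥0∞) : ballMaximal μ (fun _ => c) ≤ c :=
  iSup_le fun n => by
    rw [setLAverage_eq, setLIntegral_const]
    exact ENNReal.div_le_of_le_mul le_rfl

theorem ballMaximal_enorm_le_add {φ a : E → ℝ} (hφ : Measurable φ)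
    (ha : Measurable a) : ballMaximal μ (‖φ ·‖ₑ) ≤
      ballMaximal μ (fun x => ‖φ x - a x‖ₑ) + ballMaximal μ (‖a ·‖ₑ) := by
  refine (ballMaximal_mono fun x => ?_).trans (ballMaximal_add_le (hφ.sub ha).enorm _)
  simpa using enorm_add_le (φ x - a x) (a x)

theorem setLIntegral_closedBall_add_right [BorelSpace E] [μ.IsAddRightInvariant] (φ : E → ℝ≥0∞)
    (x : E) (r : ℝ) : ∫⁻ y in closedBall 0 r, φ (y + x) ∂μ = ∫⁻ y in closedBall x r, φ y ∂μ := by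
  rw [← (measurePreserving_add_right μ x).setLIntegral_comp_preimage_emb
    (MeasurableEquiv.addRight x).measurableEmbedding φ, preimage_add_right_closedBall, sub_self]

end BallMaximal

section HardyLittlewood

variable {E : Type*} [NormedAddCommGroup E] [NormedSpace ℝ E] [FiniteDimensional ℝ E]
  [MeasurableSpace E] [BorelSpace E] {μ : Measure E} [μ.IsAddHaarMeasure]

theorem mul_measure_le_of_forall_closedBall {φ : E → ℝ≥0∞} {S : Set E} {r : E → ℝ} {R : ℝ}
    {c : ℝ≥0∞} (hr₀ : ∀ x ∈ S, 0 < r x) (hrR : ∀ x ∈ S, r x ≤ R)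
    (hc : ∀ x ∈ S, c * μ (closedBall x (r x)) ≤ ∫⁻ y in closedBall x (r x), φ y ∂μ) :
    c * μ S ≤ 5 ^ Module.finrank ℝ E * ∫⁻ y in cthickening R S, φ y ∂μ := by
  obtain ⟨u, huS, hdisj, hcover⟩ :=
    Vitali.exists_disjoint_subfamily_covering_enlargement_closedBall S (fun x => x) r R hrR 5
      (by norm_num)
  have u_countable : u.Countable := hdisj.countable_of_nonempty_interior fun x hx =>
    ⟨x, ball_subset_interior_closedBall (mem_ball_self (hr₀ x (huS hx)))⟩
  have S_subset : S ⊆ ⋃ b ∈ u, closedBall b (5 * r b) := fun x hx => by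
    obtain ⟨b, hb, hxb⟩ := hcover x hx
    exact mem_biUnion hb (hxb (mem_closedBall_self (hr₀ x hx).le))
  have ball_enlarged (b : u) : μ (closedBall (b : E) (5 * r b)) =
      5 ^ Module.finrank ℝ E * μ (closedBall (b : E) (r b)) := by
    rw [Measure.addHaar_closedBall_mul _ _ (by norm_num) (hr₀ b (huS b.2)).le,
      Measure.addHaar_closedBall_center μ (b : E), ENNReal.ofReal_pow (by norm_num)]
    norm_num
  calc c * μ S ≤ c * ∑' b : u, μ (closedBall (b : E) (5 * r b)) := by
        gcongr
        exact (measure_mono S_subset).trans (measure_biUnion_le μ u_countable _)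
    _ = 5 ^ Module.finrank ℝ E * ∑' b : u, c * μ (closedBall (b : E) (r b)) := by
        simp only [ball_enlarged, ENNReal.tsum_mul_left]
        exact mul_left_comm _ _ _
    _ ≤ 5 ^ Module.finrank ℝ E * ∑' b : u, ∫⁻ y in closedBall (b : E) (r b), φ y ∂μ := by
        gcongr with b
        exact hc b (huS b.2)
    _ = 5 ^ Module.finrank ℝ E * ∫⁻ y in ⋃ b ∈ u, closedBall b (r b), φ y ∂μ := by
        rw [lintegral_biUnion u_countable (fun _ _ => measurableSet_closedBall) hdisj]
    _ ≤ _ := by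
        gcongr
        refine iUnion₂_subset fun b hb => ?_
        exact (closedBall_subset_closedBall (hrR b (huS hb))).trans
          (closedBall_subset_cthickening (huS hb) R)

theorem mul_measure_le_of_forall_exists_le_setLAverage {φ : E → ℝ≥0∞} {c : ℝ≥0∞} {N : ℕ} {S : Set E}
    (hS : S ⊆ closedBall 0 (N + 1))
    (hc : ∀ x ∈ S, ∃ n ≤ N, c ≤ ⨍⁻ y in closedBall 0 (n + 1), φ (y + x) ∂μ) :
    c * μ S ≤ 5 ^ Module.finrank ℝ E * ∫⁻ y in closedBall 0 (2 * (N + 1)), φ y ∂μ := by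
  choose! n hn_le hn using hc
  have ball_lower_bound (x : E) (hx : x ∈ S) :
      c * μ (closedBall x (n x + 1)) ≤ ∫⁻ y in closedBall x (n x + 1), φ y ∂μ := by
    rw [← setLIntegral_closedBall_add_right, Measure.addHaar_closedBall_center,
      ← measure_mul_setLAverage _ measure_closedBall_lt_top.ne, mul_comm]
    gcongr
    exact hn x hx
  calc c * μ S ≤ 5 ^ Module.finrank ℝ E * ∫⁻ y in cthickening (N + 1) S, φ y ∂μ := by
        refine mul_measure_le_of_forall_closedBall (fun x _ => by positivity) (fun x hx => ?_)
          ball_lower_bound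
        exact_mod_cast Nat.succ_le_succ (hn_le x hx)
    _ ≤ 5 ^ Module.finrank ℝ E * ∫⁻ y in closedBall 0 (2 * (N + 1)), φ y ∂μ := by
        gcongr
        refine (cthickening_subset_of_subset _ hS).trans ?_
        rw [cthickening_closedBall (by positivity) (by positivity), ← two_mul]

theorem setLIntegral_closedBall_comp_smul (φ : E → ℝ≥0∞) {T : ℝ} (hT : 0 < T) (R : ℝ) :
    ∫⁻ x in closedBall (0 : E) R, φ (T • x) ∂μ =
      ENNReal.ofReal (T ^ Module.finrank ℝ E)⁻¹ * ∫⁻ x in closedBall 0 (T * R), φ x ∂μ := by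
  have smul_embedding : MeasurableEmbedding fun x : E => T • x :=
    (Homeomorph.smulOfNeZero T hT.ne').measurableEmbedding
  have preimage_ball : (fun x : E => T • x) ⁻¹' closedBall 0 (T * R) = closedBall 0 R := by
    ext x
    simp [norm_smul, abs_of_pos hT, hT]
  rw [← preimage_ball, ← smul_embedding.lintegral_map, ← smul_embedding.restrict_map,
    Measure.map_addHaar_smul _ hT.ne', Measure.restrict_smul, lintegral_smul_measure,
    abs_of_pos (by positivity), smul_eq_mul]

theorem setLIntegral_closedBall_comp_smul_le (φ : E → ℝ≥0∞) {T R : ℝ} (hT : 1 ≤ T) (hR : 0 ≤ R) :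
    ∫⁻ x in closedBall (0 : E) R, φ (T • x) ∂μ ≤
      μ (closedBall 0 (R + 1)) * ballMaximal μ φ := by
  have hT₀ : 0 < T := by linarith
  set n : ℕ := ⌊T * R⌋₊
  have hn_ge : T * R ≤ n + 1 := (Nat.lt_floor_add_one _).le
  have hn_le : (n + 1 : ℝ) ≤ T * (R + 1) := by
    have : (n : ℝ) ≤ T * R := Nat.floor_le (by positivity)
    linarith
  calc ∫⁻ x in closedBall (0 : E) R, φ (T • x) ∂μ
    _ = ENNReal.ofReal (T ^ Module.finrank ℝ E)⁻¹ * ∫⁻ x in closedBall 0 (T * R), φ x ∂μ :=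
        setLIntegral_closedBall_comp_smul φ hT₀ R
    _ ≤ ENNReal.ofReal (T ^ Module.finrank ℝ E)⁻¹ * ∫⁻ x in closedBall 0 (n + 1), φ x ∂μ := by
        gcongr
    _ = ENNReal.ofReal (T ^ Module.finrank ℝ E)⁻¹ *
          (μ (closedBall 0 (n + 1)) * ⨍⁻ x in closedBall 0 (n + 1), φ x ∂μ) := by
        rw [measure_mul_setLAverage _ measure_closedBall_lt_top.ne]
    _ ≤ ENNReal.ofReal (T ^ Module.finrank ℝ E)⁻¹ *
          (μ (closedBall 0 (T * (R + 1))) * ballMaximal μ φ) := by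
        gcongr
        exact setLAverage_closedBall_le_ballMaximal φ n
    _ = μ (closedBall 0 (R + 1)) * ballMaximal μ φ := by
        rw [Measure.addHaar_closedBall_mul_of_pos μ _ hT₀, ← mul_assoc, ← mul_assoc,
          ← ENNReal.ofReal_mul (by positivity), inv_mul_cancel₀ (by positivity),
          ENNReal.ofReal_one, one_mul]

end HardyLittlewood

section MaximalErgodic

variable {E Ω : Type*} [MeasurableSpace E] [MeasurableSpace Ω] {ℙ : Measure Ω} [SFinite ℙ]

theorem lintegral_setLIntegral_vadd [VAdd E Ω] [MeasurableVAdd₂ E Ω] [VAddInvariantMeasure E Ω ℙ]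
    (μ : Measure E) [SFinite μ] {h : Ω → ℝ≥0∞} (hh : Measurable h) (B : Set E) :
    ∫⁻ ω, ∫⁻ x in B, h (x +ᵥ ω) ∂μ ∂ℙ = μ B * ∫⁻ ω, h ω ∂ℙ := by
  have h_joint : Measurable fun p : Ω × E => h (p.2 +ᵥ p.1) :=
    hh.comp (measurable_snd.vadd measurable_fst)
  rw [lintegral_lintegral_swap h_joint.aemeasurable]
  simp only [(measurePreserving_vadd _ ℙ).lintegral_comp hh, setLIntegral_const]
  exact mul_comm _ _

theorem measurable_setLIntegral_vadd [VAdd E Ω] [MeasurableVAdd₂ E Ω]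
    (μ : Measure E) [SFinite μ] {h : Ω → ℝ≥0∞} (hh : Measurable h) (B : Set E) :
    Measurable fun ω => ∫⁻ x in B, h (x +ᵥ ω) ∂μ :=
  (hh.comp (measurable_snd.vadd measurable_fst)).lintegral_prod_right'

variable [NormedAddCommGroup E] [NormedSpace ℝ E] [FiniteDimensional ℝ E] [BorelSpace E]
  [AddAction E Ω] [MeasurableVAdd₂ E Ω] [VAddInvariantMeasure E Ω ℙ]
  (μ : Measure E) [μ.IsAddHaarMeasure] {h : Ω → ℝ≥0∞}

/-- Transference: the bound holds along every orbit by the covering lemma, and integrating it over a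
large ball of base points turns it into a bound for `ℙ`. -/
theorem mul_measure_setOf_exists_le_setLAverage_vadd_le (hh : Measurable h) (c : ℝ≥0∞) (N : ℕ) :
    c * ℙ {ω | ∃ n ≤ N, c ≤ ⨍⁻ x in closedBall (0 : E) (n + 1), h (x +ᵥ ω) ∂μ} ≤
      10 ^ Module.finrank ℝ E * ∫⁻ ω, h ω ∂ℙ := by
  set A : Set Ω := {ω | ∃ n ≤ N, c ≤ ⨍⁻ x in closedBall (0 : E) (n + 1), h (x +ᵥ ω) ∂μ} with hA
  set B : Set E := closedBall 0 (N + 1)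
  have A_measurable : MeasurableSet A := by
    simp only [hA, ofPred_exists, ofPred_and, setLAverage_eq]
    exact .iUnion fun n => .inter (.const _) <|
      measurableSet_le measurable_const ((measurable_setLIntegral_vadd μ hh _).div_const _)
  have indicator_measurable : Measurable (A.indicator (1 : Ω → ℝ≥0∞)) :=
    measurable_one.indicator A_measurable
  have orbit_bound (ω : Ω) : c * ∫⁻ x in B, A.indicator 1 (x +ᵥ ω) ∂μ ≤
      5 ^ Module.finrank ℝ E * ∫⁻ y in closedBall 0 (2 * (N + 1)), h (y +ᵥ ω) ∂μ := by
    have visits_measurable : MeasurableSet {x : E | x +ᵥ ω ∈ A} :=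
      (measurable_id.vadd_const ω) A_measurable
    have visits_integral : ∫⁻ x in B, A.indicator 1 (x +ᵥ ω) ∂μ = μ ({x | x +ᵥ ω ∈ A} ∩ B) := by
      rw [← Measure.restrict_apply visits_measurable, ← lintegral_indicator_one visits_measurable]
      rfl
    rw [visits_integral]
    refine mul_measure_le_of_forall_exists_le_setLAverage inter_subset_right fun x hx => ?_
    simpa only [hA, mem_ofPred_eq, add_vadd] using hx.1
  have B_pos : μ B ≠ 0 := (measure_closedBall_pos μ 0 (by positivity)).ne'
  refine (ENNReal.mul_le_mul_iff_right B_pos measure_closedBall_lt_top.ne).1 ?_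
  calc μ B * (c * ℙ A) = ∫⁻ ω, c * ∫⁻ x in B, A.indicator 1 (x +ᵥ ω) ∂μ ∂ℙ := by
        rw [lintegral_const_mul _ (measurable_setLIntegral_vadd μ indicator_measurable B),
          lintegral_setLIntegral_vadd μ indicator_measurable, lintegral_indicator_one A_measurable,
          mul_left_comm]
    _ ≤ ∫⁻ ω, 5 ^ Module.finrank ℝ E *
          ∫⁻ y in closedBall 0 (2 * (N + 1)), h (y +ᵥ ω) ∂μ ∂ℙ := lintegral_mono orbit_bound
    _ = 5 ^ Module.finrank ℝ E * (2 ^ Module.finrank ℝ E * μ B * ∫⁻ ω, h ω ∂ℙ) := by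
        rw [lintegral_const_mul _ (measurable_setLIntegral_vadd μ hh _),
          lintegral_setLIntegral_vadd μ hh,
          Measure.addHaar_closedBall_mul _ _ zero_le_two (by positivity),
          ENNReal.ofReal_pow zero_le_two, ENNReal.ofReal_ofNat]
    _ = μ B * (10 ^ Module.finrank ℝ E * ∫⁻ ω, h ω ∂ℙ) := by
        rw [show (10 : ℝ≥0∞) = 5 * 2 by norm_num, mul_pow]
        ring

theorem mul_measure_setOf_lt_ballMaximal_vadd_le (hh : Measurable h) (c : ℝ≥0∞) :
    c * ℙ {ω | c < ballMaximal μ fun x : E => h (x +ᵥ ω)} ≤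
      10 ^ Module.finrank ℝ E * ∫⁻ ω, h ω ∂ℙ := by
  set A : ℕ → Set Ω := fun N =>
    {ω | ∃ n ≤ N, c ≤ ⨍⁻ x in closedBall (0 : E) (n + 1), h (x +ᵥ ω) ∂μ}
  have A_mono : Monotone A := fun N M hNM ω ⟨n, hn, hω⟩ => ⟨n, hn.trans hNM, hω⟩
  have subset_iUnion : {ω | c < ballMaximal μ fun x : E => h (x +ᵥ ω)} ⊆ ⋃ N, A N := fun ω hω => by
    obtain ⟨n, hn⟩ := lt_iSup_iff.1 (mem_ofPred_eq ▸ hω)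
    exact mem_iUnion.2 ⟨n, n, le_rfl, hn.le⟩
  calc c * ℙ {ω | c < ballMaximal μ fun x : E => h (x +ᵥ ω)} ≤ c * ℙ (⋃ N, A N) := by gcongr
    _ = ⨆ N, c * ℙ (A N) := by rw [A_mono.measure_iUnion, ENNReal.mul_iSup]
    _ ≤ _ := iSup_le (mul_measure_setOf_exists_le_setLAverage_vadd_le μ hh c)

end MaximalErgodic

theorem tendsto_integral_norm_comp_add_left_sub {E F : Type*} [SeminormedAddCommGroup E]
    [MeasurableSpace E] [BorelSpace E] {μ : Measure E} [IsLocallyFiniteMeasure μ]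
    [μ.InnerRegularCompactLTTop] [μ.IsAddLeftInvariant] [NormedAddCommGroup F] {u : E → F}
    (hu : Integrable u μ) :
    Tendsto (fun v : E => ∫ x, ‖u (v + x) - u x‖ ∂μ) (𝓝 0) (𝓝 0) := by
  have : Fact ((1 : ℝ≥0∞) ≠ ∞) := ⟨ENNReal.one_ne_top⟩
  have hu₁ : MemLp u 1 μ := memLp_one_iff_integrable.2 hu
  have translation_continuous : Continuous fun v : E => DomAddAct.mk v +ᵥ hu₁.toLp u :=
    DomAddAct.continuous_mk.vadd continuous_const
  have norm_tendsto :=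
    (translation_continuous.sub (continuous_const (y := hu₁.toLp u))).norm.tendsto 0
  have norm_eq (v : E) : ‖(DomAddAct.mk v +ᵥ hu₁.toLp u) - hu₁.toLp u‖ =
      ∫ x, ‖u (v + x) - u x‖ ∂μ := by
    rw [DomAddAct.mk_vadd_toLp, ← MemLp.toLp_sub, L1.norm_eq_integral_norm]
    exact integral_congr_ae ((MemLp.coeFn_toLp _).fun_comp norm)
  simpa [norm_eq] using norm_tendsto

section WeakMean

variable {E : Type*} [NormedAddCommGroup E] [NormedSpace ℝ E] [MeasurableSpace E] {μ : Measure E}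

/-- `φ` is bounded and its dilations `x ↦ φ (T • x)` converge weakly-* in `L∞(μ)` to the constant
`c` as `T → ∞`. This is homogenization of an oscillating coefficient: `T⁻¹` is the period `ε`. -/
structure HasWeakMean (μ : Measure E) (φ : E → ℝ) (c : ℝ) : Prop where
  measurable : Measurable φ
  bounded : ∃ C, ∀ x, ‖φ x‖ ≤ C
  tendsto_integral : ∀ u : E → ℝ, Integrable u μ →
    Tendsto (fun T : ℝ => ∫ x, u x * φ (T • x) ∂μ) atTop (𝓝 (c * ∫ x, u x ∂μ))

namespace HasWeakMean

variable {φ ψ : E → ℝ} {c₁ c₂ : ℝ}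

theorem const (c : ℝ) : HasWeakMean μ (fun _ => c) c where
  measurable := measurable_const
  bounded := ⟨‖c‖, fun _ => le_rfl⟩
  tendsto_integral u _ := by simp only [integral_mul_const, mul_comm c, tendsto_const_nhds]

theorem const_mul (h : HasWeakMean μ φ c₁) (r : ℝ) :
    HasWeakMean μ (fun x => r * φ x) (r * c₁) where
  measurable := h.measurable.const_mul r
  bounded := by
    obtain ⟨C, hC⟩ := h.bounded
    exact ⟨‖r‖ * C, fun x => (norm_mul_le _ _).trans (by gcongr; exact hC x)⟩
  tendsto_integral u hu := by
    simpa only [mul_left_comm _ r, integral_const_mul, mul_assoc] using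
      (h.tendsto_integral u hu).const_mul r

variable [BorelSpace E]

theorem integrable_mul_comp_smul (h : HasWeakMean μ φ c₁) {u : E → ℝ} (hu : Integrable u μ)
    (T : ℝ) : Integrable (fun x => u x * φ (T • x)) μ := by
  obtain ⟨C, hC⟩ := h.bounded
  exact hu.mul_bdd (h.measurable.comp (measurable_const_smul T)).aestronglyMeasurable
    (.of_forall fun x => hC (T • x))

theorem add (h₁ : HasWeakMean μ φ c₁) (h₂ : HasWeakMean μ ψ c₂) :
    HasWeakMean μ (fun x => φ x + ψ x) (c₁ + c₂) where
  measurable := h₁.measurable.add h₂.measurable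
  bounded := by
    obtain ⟨C, hC⟩ := h₁.bounded
    obtain ⟨D, hD⟩ := h₂.bounded
    exact ⟨C + D, fun x => norm_add_le_of_le (hC x) (hD x)⟩
  tendsto_integral u hu := by
    simp only [mul_add, add_mul]
    refine ((h₁.tendsto_integral u hu).add (h₂.tendsto_integral u hu)).congr fun T => ?_
    exact (integral_add (h₁.integrable_mul_comp_smul hu T) (h₂.integrable_mul_comp_smul hu T)).symm

theorem tendsto_integral_of_tendsto_L1 (h : HasWeakMean μ φ c₁) {G : ℝ → E → ℝ} {H : E → ℝ}
    (hG : ∀ T, Integrable (G T) μ) (hH : Integrable H μ)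
    (hGH : Tendsto (fun T => ∫ x, ‖G T x - H x‖ ∂μ) atTop (𝓝 0)) :
    Tendsto (fun T : ℝ => ∫ x, G T x * φ (T • x) ∂μ) atTop (𝓝 (c₁ * ∫ x, H x ∂μ)) := by
  obtain ⟨C, hC⟩ := h.bounded
  have sub_integrable (T : ℝ) : Integrable (fun x => G T x - H x) μ := (hG T).sub hH
  have error_tendsto : Tendsto (fun T : ℝ => ∫ x, (G T x - H x) * φ (T • x) ∂μ) atTop (𝓝 0) := by
    refine squeeze_zero_norm (fun T => ?_) (by simpa using hGH.mul_const C)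
    rw [← integral_mul_const]
    refine norm_integral_le_of_norm_le ((sub_integrable T).norm.mul_const C)
      (.of_forall fun x => ?_)
    rw [norm_mul]
    exact mul_le_mul_of_nonneg_left (hC _) (norm_nonneg _)
  have sum_tendsto := error_tendsto.add (h.tendsto_integral H hH)
  rw [zero_add] at sum_tendsto
  refine sum_tendsto.congr fun T => ?_
  rw [← integral_add (h.integrable_mul_comp_smul (sub_integrable T) T)
    (h.integrable_mul_comp_smul hH T)]
  simp only [← add_mul, sub_add_cancel]

theorem tendsto_integral_norm_integral_sub [SFinite μ] (h : HasWeakMean μ φ c₁) {F : E × E → ℝ}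
    (hF : Integrable F (μ.prod μ)) :
    Tendsto (fun T : ℝ => ∫ x, ‖∫ y, F (x, y) * φ (T • y) ∂μ - c₁ * ∫ y, F (x, y) ∂μ‖ ∂μ) atTop
      (𝓝 0) := by
  obtain ⟨C, hC⟩ := h.bounded
  have mul_integrable (T : ℝ) : Integrable (fun q => F q * φ (T • q.2)) (μ.prod μ) :=
    hF.mul_bdd (h.measurable.comp (measurable_snd.const_smul T)).aestronglyMeasurable
      (.of_forall fun _ => hC _)
  have fibre_bound (T : ℝ) {x : E} (hx : Integrable (fun y => F (x, y)) μ) :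
      ‖∫ y, F (x, y) * φ (T • y) ∂μ - c₁ * ∫ y, F (x, y) ∂μ‖ ≤
        (C + ‖c₁‖) * ∫ y, ‖F (x, y)‖ ∂μ := by
    rw [add_mul]
    refine norm_sub_le_of_le ?_ ?_
    · rw [← integral_const_mul]
      refine norm_integral_le_of_norm_le (hx.norm.const_mul C) (.of_forall fun y => ?_)
      rw [norm_mul, mul_comm]
      exact mul_le_mul_of_nonneg_right (hC _) (norm_nonneg _)
    · rw [norm_mul]
      gcongr
      exact norm_integral_le_integral_norm _
  rw [← integral_zero E ℝ (μ := μ)]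
  refine tendsto_integral_filter_of_dominated_convergence
    (fun x => (C + ‖c₁‖) * ∫ y, ‖F (x, y)‖ ∂μ) (.of_forall fun T => ?_) (.of_forall fun T => ?_)
    (hF.integral_norm_prod_left.const_mul _) ?_
  · exact ((mul_integrable T).integral_prod_left.sub
      (hF.integral_prod_left.const_mul c₁)).norm.aestronglyMeasurable
  · filter_upwards [hF.prod_right_ae] with x hx
    rw [norm_norm]
    exact fibre_bound T hx
  · filter_upwards [hF.prod_right_ae] with x hx
    exact tendsto_iff_norm_sub_tendsto_zero.1 (h.tendsto_integral _ hx)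

theorem tendsto_integral_prod [SFinite μ] (hφ : HasWeakMean μ φ c₁) (hψ : HasWeakMean μ ψ c₂)
    {F : E × E → ℝ} (hF : Integrable F (μ.prod μ)) :
    Tendsto (fun T : ℝ => ∫ q, F q * (φ (T • q.1) * ψ (T • q.2)) ∂μ.prod μ) atTop
      (𝓝 (c₁ * c₂ * ∫ q, F q ∂μ.prod μ)) := by
  obtain ⟨C, hC⟩ := hφ.bounded
  obtain ⟨D, hD⟩ := hψ.bounded
  have mul_integrable (T : ℝ) : Integrable (fun q => F q * ψ (T • q.2)) (μ.prod μ) :=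
    hF.mul_bdd (hψ.measurable.comp (measurable_snd.const_smul T)).aestronglyMeasurable
      (.of_forall fun _ => hD _)
  have mul_mul_integrable (T : ℝ) :
      Integrable (fun q => F q * ψ (T • q.2) * φ (T • q.1)) (μ.prod μ) :=
    (mul_integrable T).mul_bdd
      (hφ.measurable.comp (measurable_fst.const_smul T)).aestronglyMeasurable
      (.of_forall fun _ => hC _)
  have iterated := hφ.tendsto_integral_of_tendsto_L1
    (fun T => (mul_integrable T).integral_prod_left) (hF.integral_prod_left.const_mul c₂)
    (hψ.tendsto_integral_norm_integral_sub hF)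
  rw [integral_const_mul, ← integral_prod F hF, ← mul_assoc] at iterated
  refine iterated.congr fun T => ?_
  calc ∫ x, (∫ y, F (x, y) * ψ (T • y) ∂μ) * φ (T • x) ∂μ
    _ = ∫ q, F q * ψ (T • q.2) * φ (T • q.1) ∂μ.prod μ := by
        simp only [← integral_mul_const, integral_prod _ (mul_mul_integrable T)]
    _ = ∫ q, F q * (φ (T • q.1) * ψ (T • q.2)) ∂μ.prod μ := by
        simp only [mul_assoc, mul_comm (φ _)]

end HasWeakMean

theorem hasWeakMean_sub_comp_add_left [BorelSpace E] [FiniteDimensional ℝ E]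
    [μ.IsAddHaarMeasure] {φ : E → ℝ} (hφ : Measurable φ) {C : ℝ} (hC : ∀ x, ‖φ x‖ ≤ C) (z : E) :
    HasWeakMean μ (fun x => φ x - φ (z + x)) 0 where
  measurable := hφ.sub (hφ.comp (measurable_const_add z))
  bounded := ⟨C + C, fun x => norm_sub_le_of_le (hC _) (hC _)⟩
  tendsto_integral u hu := by
    rw [zero_mul]
    have shift_tendsto : Tendsto (fun T : ℝ => -(T⁻¹ • z)) atTop (𝓝 0) := by
      simpa using ((tendsto_inv_atTop_zero (𝕜 := ℝ)).smul_const z).neg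
    have bound_tendsto :=
      ((tendsto_integral_norm_comp_add_left_sub hu).comp shift_tendsto).const_mul C
    rw [mul_zero] at bound_tendsto
    refine squeeze_zero_norm' ?_ bound_tendsto
    filter_upwards [eventually_gt_atTop 0] with T hT
    have integrable_mul {w : E → ℝ} (hw : Integrable w μ) (y : E) :
        Integrable (fun x => w x * φ (y + T • x)) μ :=
      hw.mul_bdd (hφ.comp (by fun_prop)).aestronglyMeasurable (.of_forall fun _ => hC _)
    set v : E := -(T⁻¹ • z) with hv
    have shifted_integrable : Integrable (fun x => u (v + x)) μ := hu.comp_add_left v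
    have shift_dilation (x : E) : z + T • (v + x) = T • x := by
      rw [hv, smul_add, smul_neg, smul_inv_smul₀ hT.ne', add_neg_cancel_left]
    have shift_integral : ∫ x, u x * φ (z + T • x) ∂μ = ∫ x, u (v + x) * φ (T • x) ∂μ := by
      rw [← integral_add_left_eq_self _ v]
      simp only [shift_dilation]
    calc ‖∫ x, u x * (φ (T • x) - φ (z + T • x)) ∂μ‖
      _ = ‖∫ x, (u x - u (v + x)) * φ (T • x) ∂μ‖ := by
          have h₁ := integrable_mul hu 0
          have h₂ := integrable_mul shifted_integrable 0
          simp only [zero_add] at h₁ h₂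
          simp only [mul_sub, sub_mul]
          rw [integral_sub h₁ (integrable_mul hu z), shift_integral, integral_sub h₁ h₂]
      _ ≤ ∫ x, C * ‖u (v + x) - u x‖ ∂μ := by
          refine norm_integral_le_of_norm_le ((shifted_integrable.sub hu).norm.const_mul C)
            (.of_forall fun x => ?_)
          rw [norm_mul, mul_comm, norm_sub_rev]
          gcongr
          exact hC _
      _ = C * ∫ x, ‖u (v + x) - u x‖ ∂μ := integral_const_mul _ _

end WeakMean

section OrbitWeakMean

variable {E Ω : Type*} [NormedAddCommGroup E] [NormedSpace ℝ E] [MeasurableSpace E]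
  [MeasurableSpace Ω] [AddAction E Ω] {μ : Measure E} {ℙ : Measure Ω}

/-- A bounded observable `a` whose weak mean along *every* orbit is its expectation. These are the
observables for which homogenization is elementary; they are dense in `L²(ℙ)` by ergodicity. -/
structure HasOrbitWeakMean (μ : Measure E) (ℙ : Measure Ω) (a : Ω → ℝ) : Prop where
  measurable : Measurable a
  bounded : ∃ C, ∀ ω, ‖a ω‖ ≤ C
  hasWeakMean : ∀ ω, HasWeakMean μ (fun x => a (x +ᵥ ω)) (∫ ω', a ω' ∂ℙ)

namespace HasOrbitWeakMean

variable {a b : Ω → ℝ}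

theorem memLp [IsFiniteMeasure ℙ] (ha : HasOrbitWeakMean μ ℙ a) (p : ℝ≥0∞) : MemLp a p ℙ := by
  obtain ⟨C, hC⟩ := ha.bounded
  exact .of_bound ha.measurable.aestronglyMeasurable C (.of_forall hC)

theorem const [IsProbabilityMeasure ℙ] (c : ℝ) : HasOrbitWeakMean μ ℙ fun _ => c where
  measurable := measurable_const
  bounded := ⟨‖c‖, fun _ => le_rfl⟩
  hasWeakMean _ := by simpa using HasWeakMean.const c

theorem const_mul (ha : HasOrbitWeakMean μ ℙ a) (r : ℝ) :
    HasOrbitWeakMean μ ℙ fun ω => r * a ω where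
  measurable := ha.measurable.const_mul r
  bounded := by
    obtain ⟨C, hC⟩ := ha.bounded
    exact ⟨‖r‖ * C, fun ω => (norm_mul_le _ _).trans (by gcongr; exact hC ω)⟩
  hasWeakMean ω := by simpa only [integral_const_mul] using (ha.hasWeakMean ω).const_mul r

theorem add [BorelSpace E] [IsFiniteMeasure ℙ] (ha : HasOrbitWeakMean μ ℙ a)
    (hb : HasOrbitWeakMean μ ℙ b) : HasOrbitWeakMean μ ℙ fun ω => a ω + b ω where
  measurable := ha.measurable.add hb.measurable
  bounded := by
    obtain ⟨C, hC⟩ := ha.bounded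
    obtain ⟨D, hD⟩ := hb.bounded
    exact ⟨C + D, fun ω => norm_add_le_of_le (hC ω) (hD ω)⟩
  hasWeakMean ω := by
    rw [integral_add ((ha.memLp 1).integrable le_rfl) ((hb.memLp 1).integrable le_rfl)]
    exact (ha.hasWeakMean ω).add (hb.hasWeakMean ω)

end HasOrbitWeakMean

theorem hasOrbitWeakMean_sub_comp_vadd [BorelSpace E] [FiniteDimensional ℝ E] [μ.IsAddHaarMeasure]
    [MeasurableVAdd₂ E Ω] [VAddInvariantMeasure E Ω ℙ] [IsFiniteMeasure ℙ] {a : Ω → ℝ}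
    (ha : Measurable a) {C : ℝ} (hC : ∀ ω, ‖a ω‖ ≤ C) (z : E) :
    HasOrbitWeakMean μ ℙ fun ω => a ω - a (z +ᵥ ω) where
  measurable := ha.sub (ha.comp (measurable_const_vadd z))
  bounded := ⟨C + C, fun _ => norm_sub_le_of_le (hC _) (hC _)⟩
  hasWeakMean ω := by
    have a_integrable : Integrable a ℙ := .of_bound ha.aestronglyMeasurable C (.of_forall hC)
    have z_preserving : MeasurePreserving (fun ω : Ω => z +ᵥ ω) ℙ ℙ := measurePreserving_vadd z ℙ
    have translate_integrable : Integrable (fun ω => a (z +ᵥ ω)) ℙ :=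
      z_preserving.integrable_comp_of_integrable a_integrable
    have mean_zero : ∫ ω', (a ω' - a (z +ᵥ ω')) ∂ℙ = 0 := by
      rw [integral_sub a_integrable translate_integrable,
        z_preserving.integral_comp (measurableEmbedding_const_vadd z), sub_self]
    have orbit_measurable : Measurable fun x : E => a (x +ᵥ ω) :=
      ha.comp (measurable_id.vadd_const ω)
    have orbit_mean := hasWeakMean_sub_comp_add_left (μ := μ) orbit_measurable (fun _ => hC _) z
    simpa only [mean_zero, add_vadd] using orbit_mean

/-- The classes in `L²(ℙ)` having a representative with the orbit weak mean property. -/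
def orbitWeakMeanSubmodule [BorelSpace E] (μ : Measure E) (ℙ : Measure Ω)
    [IsProbabilityMeasure ℙ] : Submodule ℝ (Lp ℝ 2 ℙ) where
  carrier := {v | ∃ a, HasOrbitWeakMean μ ℙ a ∧ v =ᵐ[ℙ] a}
  zero_mem' := ⟨fun _ => 0, .const 0, Lp.coeFn_zero _ _ _⟩
  add_mem' := by
    rintro u v ⟨a, ha, hua⟩ ⟨b, hb, hvb⟩
    exact ⟨_, ha.add hb, (Lp.coeFn_add u v).trans (hua.add hvb)⟩
  smul_mem' := by
    rintro r v ⟨a, ha, hva⟩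
    exact ⟨_, ha.const_mul r, (Lp.coeFn_smul r v).trans (hva.const_smul r)⟩

variable [BorelSpace E] [FiniteDimensional ℝ E] [μ.IsAddHaarMeasure] [MeasurableVAdd₂ E Ω]
  [IsProbabilityMeasure ℙ]

theorem inner_vadd_eq_of_mem_orthogonal [VAddInvariantMeasure E Ω ℙ] {w : Lp ℝ 2 ℙ}
    (hw : w ∈ (orbitWeakMeanSubmodule μ ℙ)ᗮ) (z : E) (v : Lp ℝ 2 ℙ) :
    inner ℝ (DomAddAct.mk z +ᵥ v) w = inner ℝ v w := by
  refine (Lp.simpleFunc.denseRange (p := 2) (μ := ℙ) (E := ℝ) (by simp)).induction_on v ?_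
    fun s => ?_
  · exact isClosed_eq (by fun_prop) (by fun_prop)
  · have s_ae_eq := (Lp.simpleFunc.toSimpleFunc_eq_toFun s).symm
    obtain ⟨C, hC⟩ := (Lp.simpleFunc.toSimpleFunc s).exists_forall_norm_le
    rw [eq_comm, ← sub_eq_zero, ← inner_sub_left]
    refine (Submodule.mem_orthogonal _ _).1 hw _ ⟨_, hasOrbitWeakMean_sub_comp_vadd
      (Lp.simpleFunc.toSimpleFunc s).measurable hC z, ?_⟩
    refine (Lp.coeFn_sub _ _).trans (s_ae_eq.sub ?_)
    exact (DomAddAct.vadd_Lp_ae_eq _ _).trans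
      ((measurePreserving_vadd z ℙ).quasiMeasurePreserving.ae_eq_comp s_ae_eq)

theorem topologicalClosure_orbitWeakMeanSubmodule [ErgodicVAdd E Ω ℙ] :
    (orbitWeakMeanSubmodule (E := E) μ ℙ).topologicalClosure = ⊤ := by
  rw [Submodule.topologicalClosure_eq_top_iff, Submodule.eq_bot_iff]
  intro w hw
  refine Lp_eq_zero_of_forall_vadd_eq (G := E) (fun z => ?_) ?_
  · refine vadd_Lp_eq_of_inner_sub_vadd_eq_zero ?_
    rw [inner_sub_right, real_inner_comm (DomAddAct.mk z +ᵥ w),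
      inner_vadd_eq_of_mem_orthogonal hw z w, sub_self]
  · have one_mem : (memLp_const 1).toLp (fun _ => (1 : ℝ)) ∈ orbitWeakMeanSubmodule μ ℙ :=
      ⟨_, .const 1, MemLp.coeFn_toLp _⟩
    rw [← (Submodule.mem_orthogonal _ _).1 hw _ one_mem, L2.inner_def]
    refine integral_congr_ae ?_
    filter_upwards [(memLp_const (μ := ℙ) (p := 2) (1 : ℝ)).coeFn_toLp] with ω hω
    rw [hω]
    simp

theorem exists_hasOrbitWeakMean_lintegral_enorm_sub_le [ErgodicVAdd E Ω ℙ] {h : Ω → ℝ}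
    (hh : Integrable h ℙ) {δ : ℝ≥0∞} (hδ : δ ≠ 0) :
    ∃ a, HasOrbitWeakMean μ ℙ a ∧ ∫⁻ ω, ‖h ω - a ω‖ₑ ∂ℙ ≤ δ := by
  obtain ⟨s, hs, -⟩ := (memLp_one_iff_integrable.2 hh).exists_simpleFunc_eLpNorm_sub_lt
    ENNReal.one_ne_top (ENNReal.half_pos hδ).ne'
  have s_memLp : MemLp s 2 ℙ := s.memLp_of_isFiniteMeasure 2 ℙ
  have s_mem_closure : s_memLp.toLp s ∈ (orbitWeakMeanSubmodule μ ℙ).topologicalClosure := by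
    rw [topologicalClosure_orbitWeakMeanSubmodule]
    trivial
  obtain ⟨v, ⟨a, ha, hva⟩, hv⟩ :=
    EMetric.mem_closure_iff.1 s_mem_closure (δ / 2) (ENNReal.half_pos hδ)
  have v_eq : (ha.memLp 2).toLp a = v := Lp.ext ((MemLp.coeFn_toLp _).trans hva.symm)
  rw [← v_eq, Lp.edist_toLp_toLp] at hv
  have s_sub_aestronglyMeasurable : AEStronglyMeasurable (⇑s - a) ℙ :=
    s.aestronglyMeasurable.sub ha.measurable.aestronglyMeasurable
  refine ⟨a, ha, ?_⟩
  calc ∫⁻ ω, ‖h ω - a ω‖ₑ ∂ℙ = eLpNorm ((h - ⇑s) + (⇑s - a)) 1 ℙ := by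
        simp [eLpNorm_one_eq_lintegral_enorm]
    _ ≤ eLpNorm (h - ⇑s) 1 ℙ + eLpNorm (⇑s - a) 1 ℙ :=
        eLpNorm_add_le (hh.1.sub s.aestronglyMeasurable) s_sub_aestronglyMeasurable le_rfl
    _ ≤ eLpNorm (h - ⇑s) 1 ℙ + eLpNorm (⇑s - a) 2 ℙ := by
        gcongr
        exact eLpNorm_le_eLpNorm_of_exponent_le one_le_two s_sub_aestronglyMeasurable
    _ ≤ δ / 2 + δ / 2 := add_le_add hs.le hv.le
    _ = δ := ENNReal.add_halves δ

end OrbitWeakMean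

section TestKernel

variable {E : Type*} [NormedAddCommGroup E] [MeasurableSpace E]

/-- The integrands `F (x, y)` against which oscillating coefficients are tested: measurable,
bounded, and vanishing outside a bounded set. -/
structure IsTestKernel (F : E × E → ℝ) : Prop where
  measurable : Measurable F
  bounded : ∃ M, ∀ q, ‖F q‖ ≤ M
  isBounded_support : Bornology.IsBounded (Function.support F)

/-- `φ` is measurable and the averages of `|φ|` over the balls of radius `1, 2, 3, …` are bounded:
the integrability at infinity shared by almost every orbit of an integrable observable. -/
structure HasBoundedAverages (μ : Measure E) (φ : E → ℝ) : Prop where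
  measurable : Measurable φ
  ballMaximal_ne_top : ballMaximal μ (‖φ ·‖ₑ) ≠ ∞

variable [NormedSpace ℝ E] [FiniteDimensional ℝ E] {μ : Measure E} [μ.IsAddHaarMeasure]

theorem setLIntegral_closedBall_prod_comp_smul_le [BorelSpace E] {φ ψ : E → ℝ≥0∞}
    (hφ : Measurable φ) (hψ : Measurable ψ) {T R : ℝ} (hT : 1 ≤ T) (hR : 0 ≤ R) :
    ∫⁻ q in closedBall (0 : E × E) R, φ (T • q.1) * ψ (T • q.2) ∂μ.prod μ ≤
      μ (closedBall 0 (R + 1)) ^ 2 * (ballMaximal μ φ * ballMaximal μ ψ) := by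
  calc ∫⁻ q in closedBall (0 : E × E) R, φ (T • q.1) * ψ (T • q.2) ∂μ.prod μ
    _ = (∫⁻ x in closedBall 0 R, φ (T • x) ∂μ) * ∫⁻ y in closedBall 0 R, ψ (T • y) ∂μ := by
        rw [← Prod.mk_zero_zero, ← closedBall_prod_same, ← Measure.prod_restrict]
        exact lintegral_prod_mul (hφ.comp (measurable_const_smul T)).aemeasurable
          (hψ.comp (measurable_const_smul T)).aemeasurable
    _ ≤ (μ (closedBall 0 (R + 1)) * ballMaximal μ φ) *
          (μ (closedBall 0 (R + 1)) * ballMaximal μ ψ) := by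
        gcongr <;> exact setLIntegral_closedBall_comp_smul_le _ hT hR
    _ = _ := by ring

namespace IsTestKernel

variable {F : E × E → ℝ}

theorem integrable (hF : IsTestKernel F) : Integrable F (μ.prod μ) := by
  obtain ⟨M, hM⟩ := hF.bounded
  obtain ⟨R, hR⟩ := hF.isBounded_support.subset_closedBall 0
  exact (integrableOn_iff_integrable_of_support_subset hR).1 <|
    Measure.integrableOn_of_bounded measure_closedBall_lt_top.ne
      hF.measurable.aestronglyMeasurable (.of_forall hM)

variable [BorelSpace E]

theorem exists_lintegral_mul_comp_smul_le (hF : IsTestKernel F) :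
    ∃ K : ℝ≥0∞, K ≠ ∞ ∧ ∀ T : ℝ, 1 ≤ T → ∀ φ ψ : E → ℝ≥0∞, Measurable φ → Measurable ψ →
      ∫⁻ q, ‖F q‖ₑ * (φ (T • q.1) * ψ (T • q.2)) ∂μ.prod μ ≤
        K * (ballMaximal μ φ * ballMaximal μ ψ) := by
  obtain ⟨M, hM⟩ := hF.bounded
  obtain ⟨R, hR, hFR⟩ := hF.isBounded_support.subset_closedBall_lt 0 0
  have V_ne_top : μ (closedBall 0 (R + 1)) ≠ ∞ := measure_closedBall_lt_top.ne
  refine ⟨ENNReal.ofReal M * μ (closedBall 0 (R + 1)) ^ 2, by finiteness,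
    fun T hT φ ψ hφ hψ => ?_⟩
  calc ∫⁻ q, ‖F q‖ₑ * (φ (T • q.1) * ψ (T • q.2)) ∂μ.prod μ
    _ = ∫⁻ q in closedBall 0 R, ‖F q‖ₑ * (φ (T • q.1) * ψ (T • q.2)) ∂μ.prod μ := by
        refine (setLIntegral_eq_of_support_subset fun q hq => hFR fun hFq => hq ?_).symm
        simp [hFq]
    _ ≤ ∫⁻ q in closedBall 0 R, ENNReal.ofReal M * (φ (T • q.1) * ψ (T • q.2)) ∂μ.prod μ := by
        gcongr with q
        rw [← ofReal_norm]
        exact ENNReal.ofReal_le_ofReal (hM q)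
    _ = ENNReal.ofReal M *
          ∫⁻ q in closedBall 0 R, φ (T • q.1) * ψ (T • q.2) ∂μ.prod μ :=
        lintegral_const_mul' _ _ ENNReal.ofReal_ne_top
    _ ≤ _ := by
        rw [mul_assoc]
        gcongr
        exact setLIntegral_closedBall_prod_comp_smul_le hφ hψ hT hR.le

theorem integrable_mul_comp_smul (hF : IsTestKernel F) {φ ψ : E → ℝ}
    (hφ : HasBoundedAverages μ φ) (hψ : HasBoundedAverages μ ψ) {T : ℝ} (hT : 1 ≤ T) :
    Integrable (fun q => F q * (φ (T • q.1) * ψ (T • q.2))) (μ.prod μ) := by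
  have φT_measurable : Measurable fun q : E × E => φ (T • q.1) :=
    hφ.measurable.comp (measurable_fst.const_smul T)
  have ψT_measurable : Measurable fun q : E × E => ψ (T • q.2) :=
    hψ.measurable.comp (measurable_snd.const_smul T)
  refine ⟨(hF.measurable.mul (φT_measurable.mul ψT_measurable)).aestronglyMeasurable, ?_⟩
  obtain ⟨K, hK, hF_le⟩ := hF.exists_lintegral_mul_comp_smul_le (μ := μ)
  simp only [hasFiniteIntegral_iff_enorm, enorm_mul]
  refine (hF_le T hT _ _ hφ.measurable.enorm hψ.measurable.enorm).trans_lt ?_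
  exact ENNReal.mul_lt_top hK.lt_top
    (ENNReal.mul_lt_top hφ.ballMaximal_ne_top.lt_top hψ.ballMaximal_ne_top.lt_top)

theorem exists_enorm_integral_sub_integral_le (hF : IsTestKernel F) :
    ∃ K : ℝ≥0∞, K ≠ ∞ ∧ ∀ T : ℝ, 1 ≤ T → ∀ φ ψ a b : E → ℝ,
      HasBoundedAverages μ φ → HasBoundedAverages μ ψ →
      HasBoundedAverages μ a → HasBoundedAverages μ b →
      ‖∫ q, F q * (φ (T • q.1) * ψ (T • q.2)) ∂μ.prod μ -
          ∫ q, F q * (a (T • q.1) * b (T • q.2)) ∂μ.prod μ‖ₑ ≤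
        K * (ballMaximal μ (fun x => ‖φ x - a x‖ₑ) * ballMaximal μ (‖ψ ·‖ₑ) +
          ballMaximal μ (‖a ·‖ₑ) * ballMaximal μ (fun x => ‖ψ x - b x‖ₑ)) := by
  obtain ⟨K, hK, hF_le⟩ := hF.exists_lintegral_mul_comp_smul_le (μ := μ)
  refine ⟨K, hK, fun T hT φ ψ a b hφ hψ ha hb => ?_⟩
  have product_difference (x y : E) :
      ‖φ x * ψ y - a x * b y‖ₑ ≤ ‖φ x - a x‖ₑ * ‖ψ y‖ₑ + ‖a x‖ₑ * ‖ψ y - b y‖ₑ := by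
    rw [← enorm_mul, ← enorm_mul]
    convert enorm_add_le ((φ x - a x) * ψ y) (a x * (ψ y - b y)) using 2
    ring
  have φa_measurable : Measurable fun x => ‖φ x - a x‖ₑ := (hφ.measurable.sub ha.measurable).enorm
  have ψb_measurable : Measurable fun x => ‖ψ x - b x‖ₑ := (hψ.measurable.sub hb.measurable).enorm
  have first_measurable : Measurable fun q : E × E =>
      ‖F q‖ₑ * (‖φ (T • q.1) - a (T • q.1)‖ₑ * ‖ψ (T • q.2)‖ₑ) :=
    hF.measurable.enorm.mul <| (φa_measurable.comp (measurable_fst.const_smul T)).mul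
      (hψ.measurable.enorm.comp (measurable_snd.const_smul T))
  rw [← integral_sub (hF.integrable_mul_comp_smul hφ hψ hT)
    (hF.integrable_mul_comp_smul ha hb hT), mul_add]
  calc ‖∫ q, (F q * (φ (T • q.1) * ψ (T • q.2)) - F q * (a (T • q.1) * b (T • q.2))) ∂μ.prod μ‖ₑ
    _ ≤ ∫⁻ q, (‖F q‖ₑ * (‖φ (T • q.1) - a (T • q.1)‖ₑ * ‖ψ (T • q.2)‖ₑ) +
          ‖F q‖ₑ * (‖a (T • q.1)‖ₑ * ‖ψ (T • q.2) - b (T • q.2)‖ₑ)) ∂μ.prod μ := by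
        refine (enorm_integral_le_lintegral_enorm _).trans (lintegral_mono fun q => ?_)
        rw [← mul_sub, enorm_mul, ← mul_add]
        gcongr
        exact product_difference _ _
    _ ≤ _ := by
        rw [lintegral_add_left first_measurable]
        exact add_le_add (hF_le T hT _ _ φa_measurable hψ.measurable.enorm)
          (hF_le T hT _ _ ha.measurable.enorm ψb_measurable)

end IsTestKernel

end TestKernel

section MaximalMean

variable {E : Type*} [NormedAddCommGroup E] [NormedSpace ℝ E] [MeasurableSpace E] {μ : Measure E}
  {φ ψ : E → ℝ} {c c₁ c₂ : ℝ}

/-- `φ`, possibly unbounded, is a limit of bounded functions with a weak mean, in the sense that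
the ball averages of the difference tend to zero uniformly in the radius, and `c` is the limit of
their means. -/
structure HasMaximalMean (μ : Measure E) (φ : E → ℝ) (c : ℝ) : Prop where
  measurable : Measurable φ
  exists_approx : ∃ (a : ℕ → E → ℝ) (m : ℕ → ℝ), (∀ n, HasWeakMean μ (a n) (m n)) ∧
    Tendsto m atTop (𝓝 c) ∧
    Tendsto (fun n => ballMaximal μ fun x => ‖φ x - a n x‖ₑ) atTop (𝓝 0)

theorem HasWeakMean.hasBoundedAverages (h : HasWeakMean μ φ c) : HasBoundedAverages μ φ where
  measurable := h.measurable
  ballMaximal_ne_top := by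
    obtain ⟨C, hC⟩ := h.bounded
    refine ne_top_of_le_ne_top (ENNReal.ofReal_ne_top (r := C)) ?_
    refine (ballMaximal_mono fun x => ?_).trans (ballMaximal_const_le _)
    rw [← ofReal_norm]
    exact ENNReal.ofReal_le_ofReal (hC x)

theorem HasMaximalMean.hasBoundedAverages (h : HasMaximalMean μ φ c) :
    HasBoundedAverages μ φ where
  measurable := h.measurable
  ballMaximal_ne_top := by
    obtain ⟨a, m, ha, -, hφa⟩ := h.exists_approx
    obtain ⟨n, hn⟩ := (hφa.eventually_lt_const ENNReal.zero_lt_top).exists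
    refine ne_top_of_le_ne_top ?_ (ballMaximal_enorm_le_add h.measurable (ha n).measurable)
    exact ENNReal.add_ne_top.2 ⟨hn.ne, (ha n).hasBoundedAverages.ballMaximal_ne_top⟩

theorem HasMaximalMean.tendsto_integral_prod [FiniteDimensional ℝ E] [BorelSpace E]
    [μ.IsAddHaarMeasure] (hφ : HasMaximalMean μ φ c₁) (hψ : HasMaximalMean μ ψ c₂)
    {F : E × E → ℝ} (hF : IsTestKernel F) :
    Tendsto (fun T : ℝ => ∫ q, F q * (φ (T • q.1) * ψ (T • q.2)) ∂μ.prod μ) atTop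
      (𝓝 (c₁ * c₂ * ∫ q, F q ∂μ.prod μ)) := by
  obtain ⟨a, m, ha, hm, hφa⟩ := hφ.exists_approx
  obtain ⟨b, k, hb, hk, hψb⟩ := hψ.exists_approx
  obtain ⟨K, hK, h_error⟩ := hF.exists_enorm_integral_sub_integral_le (μ := μ)
  have ha_le (n : ℕ) : ballMaximal μ (‖a n ·‖ₑ) ≤
      ballMaximal μ (fun x => ‖φ x - a n x‖ₑ) + ballMaximal μ (‖φ ·‖ₑ) := by
    simpa only [enorm_sub_rev] using
      ballMaximal_enorm_le_add (μ := μ) (ha n).measurable hφ.measurable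
  have error_bound_tendsto : Tendsto (fun n =>
      K * (ballMaximal μ (fun x => ‖φ x - a n x‖ₑ) * ballMaximal μ (‖ψ ·‖ₑ) +
        (ballMaximal μ (fun x => ‖φ x - a n x‖ₑ) + ballMaximal μ (‖φ ·‖ₑ)) *
          ballMaximal μ (fun x => ‖ψ x - b n x‖ₑ))) atTop (𝓝 0) := by
    have first := ENNReal.Tendsto.mul_const (b := ballMaximal μ (‖ψ ·‖ₑ)) hφa
      (.inr hψ.hasBoundedAverages.ballMaximal_ne_top)
    have second := ENNReal.Tendsto.mul (hφa.add_const (ballMaximal μ (‖φ ·‖ₑ)))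
      (.inr ENNReal.zero_ne_top) hψb
      (.inr (by simpa using hφ.hasBoundedAverages.ballMaximal_ne_top))
    simpa using ENNReal.Tendsto.const_mul (first.add second) (.inr hK)
  refine TendstoUniformlyOnFilter.tendsto_of_eventually_tendsto (p := atTop) ?_
    (.of_forall fun n => (ha n).tendsto_integral_prod (hb n) (hF.integrable (μ := μ)))
    ((hm.mul hk).mul_const _)
  refine tendstoUniformlyOnFilter_iff.2 fun δ hδ => ?_
  filter_upwards [(error_bound_tendsto.eventually_lt_const (ENNReal.ofReal_pos.2 hδ)).prod_mk
    (eventually_ge_atTop 1)] with ⟨n, T⟩ ⟨hn, hT⟩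
  rw [← edist_lt_ofReal, edist_eq_enorm_sub]
  refine (h_error T hT φ ψ (a n) (b n) hφ.hasBoundedAverages hψ.hasBoundedAverages
    (ha n).hasBoundedAverages (hb n).hasBoundedAverages).trans_lt (lt_of_le_of_lt ?_ hn)
  gcongr
  exact ha_le n

end MaximalMean

section OrbitMaximalMean

variable {E Ω : Type*} [NormedAddCommGroup E] [NormedSpace ℝ E] [FiniteDimensional ℝ E]
  [MeasurableSpace E] [BorelSpace E] [MeasurableSpace Ω] [AddAction E Ω] [MeasurableVAdd₂ E Ω]
  {ℙ : Measure Ω} [IsProbabilityMeasure ℙ] (μ : Measure E) [μ.IsAddHaarMeasure]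

theorem ae_tendsto_ballMaximal_vadd [VAddInvariantMeasure E Ω ℙ] {h : ℕ → Ω → ℝ≥0∞}
    (hh : ∀ n, Measurable (h n)) (h_le : ∀ n, ∫⁻ ω, h n ω ∂ℙ ≤ 2⁻¹ ^ n * 2⁻¹ ^ n) :
    ∀ᵐ ω ∂ℙ, Tendsto (fun n => ballMaximal μ fun x : E => h n (x +ᵥ ω)) atTop (𝓝 0) := by
  set bad : ℕ → Set Ω := fun n => {ω | 2⁻¹ ^ n < ballMaximal μ fun x : E => h n (x +ᵥ ω)}
  have bad_le (n : ℕ) : ℙ (bad n) ≤ 10 ^ Module.finrank ℝ E * 2⁻¹ ^ n := by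
    have scale_ne_zero : (2⁻¹ ^ n : ℝ≥0∞) ≠ 0 := by simp
    have scale_ne_top : (2⁻¹ ^ n : ℝ≥0∞) ≠ ∞ := by finiteness
    refine (ENNReal.mul_le_mul_iff_right scale_ne_zero scale_ne_top).1 ?_
    calc 2⁻¹ ^ n * ℙ (bad n) ≤ 10 ^ Module.finrank ℝ E * ∫⁻ ω, h n ω ∂ℙ :=
          mul_measure_setOf_lt_ballMaximal_vadd_le μ (hh n) _
      _ ≤ 10 ^ Module.finrank ℝ E * (2⁻¹ ^ n * 2⁻¹ ^ n) := by gcongr; exact h_le n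
      _ = 2⁻¹ ^ n * (10 ^ Module.finrank ℝ E * 2⁻¹ ^ n) := by ring
  have bad_summable : ∑' n, ℙ (bad n) ≠ ∞ := by
    refine ne_top_of_le_ne_top ?_ (ENNReal.tsum_le_tsum bad_le)
    rw [ENNReal.tsum_mul_left, ENNReal.tsum_geometric, ENNReal.one_sub_inv_two, inv_inv]
    finiteness
  filter_upwards [ae_eventually_notMem bad_summable] with ω hω
  have scale_tendsto : Tendsto (fun n : ℕ => (2⁻¹ ^ n : ℝ≥0∞)) atTop (𝓝 0) :=
    ENNReal.tendsto_pow_atTop_nhds_zero_of_lt_one (by simp)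
  exact tendsto_of_tendsto_of_tendsto_of_le_of_le' tendsto_const_nhds scale_tendsto
    (.of_forall fun _ => zero_le) (hω.mono fun n hn => not_lt.1 hn)

variable [ErgodicVAdd E Ω ℙ]

theorem ae_hasMaximalMean_vadd {h : Ω → ℝ} (hh : Measurable h) (hh_int : Integrable h ℙ) :
    ∀ᵐ ω ∂ℙ, HasMaximalMean μ (fun x : E => h (x +ᵥ ω)) (∫ ω', h ω' ∂ℙ) := by
  choose a ha h_sub_le using fun n : ℕ =>
    exists_hasOrbitWeakMean_lintegral_enorm_sub_le (μ := μ) hh_int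
      (δ := 2⁻¹ ^ n * 2⁻¹ ^ n) (by simp)
  have mean_tendsto : Tendsto (fun n => ∫ ω, a n ω ∂ℙ) atTop (𝓝 (∫ ω, h ω ∂ℙ)) := by
    refine tendsto_integral_of_L1 h hh.aestronglyMeasurable
      (.of_forall fun n => ((ha n).memLp 1).integrable le_rfl) ?_
    simp only [enorm_sub_rev _ (h _)]
    refine tendsto_of_tendsto_of_tendsto_of_le_of_le tendsto_const_nhds ?_ (fun _ => zero_le)
      h_sub_le
    simpa only [← mul_pow] using ENNReal.tendsto_pow_atTop_nhds_zero_of_lt_one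
      (mul_lt_one' ENNReal.one_half_lt_one ENNReal.one_half_lt_one)
  filter_upwards [ae_tendsto_ballMaximal_vadd μ
    (fun n => (hh.sub (ha n).measurable).enorm) h_sub_le] with ω hω
  exact ⟨hh.comp (measurable_id.vadd_const ω), _, _, fun n => (ha n).hasWeakMean ω,
    mean_tendsto, hω⟩

theorem ae_forall_tendsto_integral_mul_vadd {h₁ h₂ : Ω → ℝ} (hh₁ : Measurable h₁)
    (hh₂ : Measurable h₂) (hh₁_int : Integrable h₁ ℙ) (hh₂_int : Integrable h₂ ℙ) :
    ∀ᵐ ω ∂ℙ, ∀ F : E × E → ℝ, IsTestKernel F →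
      Tendsto (fun T : ℝ => ∫ q, F q * (h₁ ((T • q.1) +ᵥ ω) * h₂ ((T • q.2) +ᵥ ω)) ∂μ.prod μ) atTop
        (𝓝 ((∫ ω', h₁ ω' ∂ℙ) * (∫ ω', h₂ ω' ∂ℙ) * ∫ q, F q ∂μ.prod μ)) := by
  filter_upwards [ae_hasMaximalMean_vadd μ hh₁ hh₁_int, ae_hasMaximalMean_vadd μ hh₂ hh₂_int]
    with ω hω₁ hω₂ F hF
  exact hω₁.tendsto_integral_prod hω₂ hF

end OrbitMaximalMean

section TruncatedKernel

variable {E : Type*} [NormedAddCommGroup E]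

/-- The pairs at distance between `η` and `1 / η` whose difference lies in `Γ`. -/
def truncationSet (Γ : Set E) (η : ℝ) : Set (E × E) :=
  {q | η < ‖q.1 - q.2‖ ∧ ‖q.1 - q.2‖ < 1 / η ∧ q.1 - q.2 ∈ Γ}

/-- The integrand of the bilinear form with jump kernel `|x - y| ^ (-s)`; in the stable-like case
`s = d + α`. -/
def jumpKernel (s : ℝ) (f g : E → ℝ) (q : E × E) : ℝ :=
  (f q.2 - f q.1) * (g q.2 - g q.1) / ‖q.1 - q.2‖ ^ s

theorem exists_abs_jumpKernel_le_of_norm_mem_Icc (s : ℝ) {a : ℝ} (ha : 0 < a) (b : ℝ) :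
    ∃ C, ∀ (f g : E → ℝ) (M N : ℝ) (q : E × E), ‖q.1 - q.2‖ ∈ Icc a b → |f q.1| ≤ M →
      |f q.2| ≤ M → |g q.1| ≤ N → |g q.2| ≤ N → |jumpKernel s f g q| ≤ (M + M) * (N + N) * C := by
  obtain ⟨C, hC⟩ : ∃ C, ∀ r ∈ Icc a b, ‖(r ^ s)⁻¹‖ ≤ C :=
    isCompact_Icc.exists_bound_of_continuousOn <|
      (continuousOn_id.rpow_const fun r hr => .inl (ha.trans_le hr.1).ne').inv₀
        fun r hr => (Real.rpow_pos_of_pos (ha.trans_le hr.1) s).ne'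
  refine ⟨C, fun f g M N q hq hf₁ hf₂ hg₁ hg₂ => ?_⟩
  rw [jumpKernel, div_eq_mul_inv, abs_mul, abs_mul]
  have M_nonneg : 0 ≤ M := (abs_nonneg _).trans hf₁
  have N_nonneg : 0 ≤ N := (abs_nonneg _).trans hg₁
  gcongr
  · exact (abs_sub _ _).trans (add_le_add hf₂ hf₁)
  · exact (abs_sub _ _).trans (add_le_add hg₂ hg₁)
  · exact hC _ hq

variable {Γ : Set E} {η : ℝ} {f g : E → ℝ}

theorem exists_forall_mem_closedBall_of_jumpKernel_ne_zero
    (hg : Bornology.IsBounded (Function.support g)) (s δ : ℝ) :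
    ∃ R, ∀ q : E × E, ‖q.1 - q.2‖ ≤ δ → jumpKernel s f g q ≠ 0 → q ∈ closedBall 0 R := by
  obtain ⟨R, hR⟩ := hg.subset_closedBall 0
  refine ⟨R + δ, fun q hq hJ => ?_⟩
  have hδ : 0 ≤ δ := (norm_nonneg _).trans hq
  have norm_fst_le : ‖q.1‖ ≤ ‖q.2‖ + ‖q.1 - q.2‖ := norm_le_norm_add_norm_sub' _ _
  have norm_snd_le : ‖q.2‖ ≤ ‖q.1‖ + ‖q.1 - q.2‖ := norm_le_norm_add_norm_sub _ _
  have norm_le : ‖q.1‖ ≤ R ∨ ‖q.2‖ ≤ R := by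
    by_contra! h
    have g_eq_zero (x : E) (hx : R < ‖x‖) : g x = 0 :=
      Function.notMem_support.1 fun hgx => hx.not_ge (mem_closedBall_zero_iff.1 (hR hgx))
    exact hJ (by simp [jumpKernel, g_eq_zero _ h.1, g_eq_zero _ h.2])
  rw [mem_closedBall_zero_iff, Prod.norm_def]
  rcases norm_le with h | h <;> exact max_le (by linarith) (by linarith)

variable [MeasurableSpace E] [BorelSpace E] [SecondCountableTopology E]

theorem measurableSet_truncationSet (hΓ : MeasurableSet Γ) (η : ℝ) :
    MeasurableSet (truncationSet Γ η) := by
  have sub_measurable : Measurable fun q : E × E => q.1 - q.2 := measurable_fst.sub measurable_snd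
  exact (measurableSet_lt measurable_const sub_measurable.norm).inter
    ((measurableSet_lt sub_measurable.norm measurable_const).inter (sub_measurable hΓ))

theorem measurable_jumpKernel (s : ℝ) (hf : Measurable f) (hg : Measurable g) :
    Measurable (jumpKernel s f g) := by
  unfold jumpKernel
  fun_prop

theorem isTestKernel_indicator_truncationSet_jumpKernel (hΓ : MeasurableSet Γ) (s : ℝ)
    (hη : 0 < η) (hf : Measurable f) (hf_bdd : ∀ R, 0 < R → ∃ M, ∀ x ∈ ball 0 R, |f x| ≤ M)
    (hg : Measurable g) (hg_bdd : ∃ M, ∀ x, |g x| ≤ M)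
    (hg_supp : Bornology.IsBounded (Function.support g)) :
    IsTestKernel ((truncationSet Γ η).indicator (jumpKernel s f g)) := by
  obtain ⟨R, hR⟩ := exists_forall_mem_closedBall_of_jumpKernel_ne_zero (f := f) hg_supp s (1 / η)
  obtain ⟨C, hC⟩ := exists_abs_jumpKernel_le_of_norm_mem_Icc (E := E) s hη (1 / η)
  obtain ⟨M, hM⟩ := hf_bdd (max R 0 + 1) (by positivity)
  obtain ⟨N, hN⟩ := hg_bdd
  have norm_le {q : E × E} (hq : q ∈ truncationSet Γ η) (hJ : jumpKernel s f g q ≠ 0) :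
      ‖q‖ ≤ R := mem_closedBall_zero_iff.1 (hR q hq.2.1.le hJ)
  refine ⟨(measurable_jumpKernel s hf hg).indicator (measurableSet_truncationSet hΓ η),
    ⟨max 0 ((M + M) * (N + N) * C), fun q => ?_⟩,
    (isBounded_closedBall (x := 0) (r := R)).subset fun q hq => ?_⟩
  · by_cases hq : (truncationSet Γ η).indicator (jumpKernel s f g) q = 0
    · simp [hq]
    · obtain ⟨q_mem, hJ⟩ := indicator_apply_ne_zero.1 hq
      have hfM (x : E) (hx : ‖x‖ ≤ ‖q‖) : |f x| ≤ M := by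
        have : R ≤ max R 0 := le_max_left R 0
        exact hM x (mem_ball_zero_iff.2 (by linarith [norm_le q_mem hJ]))
      rw [indicator_of_mem q_mem]
      exact le_max_of_le_right <| hC f g M N q ⟨q_mem.1.le, q_mem.2.1.le⟩
        (hfM _ (norm_fst_le q)) (hfM _ (norm_snd_le q)) (hN _) (hN _)
  · obtain ⟨q_mem, hJ⟩ := indicator_apply_ne_zero.1 hq
    exact mem_closedBall_zero_iff.2 (norm_le q_mem hJ)

end TruncatedKernel

theorem integrable_of_integrable_rpow {Ω : Type*} [MeasurableSpace Ω] {ℙ : Measure Ω}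
    [IsFiniteMeasure ℙ] {X : Ω → ℝ} (hX : AEStronglyMeasurable X ℙ) (hX_nonneg : ∀ ω, 0 ≤ X ω)
    {p : ℝ} (hp : 1 ≤ p) (h : Integrable (fun ω => X ω ^ p) ℙ) : Integrable X ℙ := by
  refine MemLp.integrable (q := ENNReal.ofReal p) (by simpa using hp) ?_
  refine (integrable_norm_rpow_iff hX (by simpa using zero_lt_one.trans_le hp)
    ENNReal.ofReal_ne_top).1 ?_
  simpa only [Real.norm_of_nonneg (hX_nonneg _), ENNReal.toReal_ofReal (zero_le_one.trans hp)]

theorem truncated_form_convergence_product_general {E Ω : Type*} [NormedAddCommGroup E]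
    [NormedSpace ℝ E] [FiniteDimensional ℝ E] [MeasurableSpace E] [BorelSpace E] (μ : Measure E)
    [μ.IsAddHaarMeasure] [MeasurableSpace Ω] (ℙ : Measure Ω) [IsProbabilityMeasure ℙ]
    (τ : E → Ω → Ω) (hτ0 : τ 0 = id) (hτadd : ∀ x y, τ x ∘ τ y = τ (x + y))
    (hτmeas : Measurable fun p : E × Ω => τ p.1 p.2) (hτstat : ∀ x, MeasurePreserving (τ x) ℙ ℙ)
    (hτerg : ∀ A : Set Ω, MeasurableSet A → (∀ x, τ x ⁻¹' A = A) → ℙ A = 0 ∨ ℙ A = 1)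
    {Γ : Set E} (hΓ : MeasurableSet Γ) (s : ℝ) {ν₁ ν₂ : Ω → ℝ} (hν₁ : Measurable ν₁)
    (hν₂ : Measurable ν₂) (hν₁_int : Integrable ν₁ ℙ) (hν₂_int : Integrable ν₂ ℙ) :
    ∃ Ω₂ : Set Ω, MeasurableSet Ω₂ ∧ ℙ Ω₂ = 1 ∧
      ∀ ω ∈ Ω₂, ∀ η : ℝ, 0 < η →
      ∀ f : E → ℝ, Measurable f → (∀ R : ℝ, 0 < R → ∃ M, ∀ x ∈ ball 0 R, |f x| ≤ M) →
      ∀ g : E → ℝ, Measurable g → (∃ M, ∀ x, |g x| ≤ M) → HasCompactSupport g →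
      Tendsto (fun ε : ℝ => ∫ q in truncationSet Γ η, jumpKernel s f g q *
          (ν₁ (τ (ε⁻¹ • q.1) ω) * ν₂ (τ (ε⁻¹ • q.2) ω)) ∂μ.prod μ)
        (𝓝[>] 0)
        (𝓝 ((∫ ω', ν₁ ω' ∂ℙ) * (∫ ω', ν₂ ω' ∂ℙ) *
          ∫ q in truncationSet Γ η, jumpKernel s f g q ∂μ.prod μ)) := by
  let _ : AddAction E Ω :=
    { vadd := τ
      zero_vadd := congrFun hτ0
      add_vadd := fun x y ω => (congrFun (hτadd x y) ω).symm }
  have : MeasurableVAdd₂ E Ω := ⟨hτmeas⟩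
  have : VAddInvariantMeasure E Ω ℙ :=
    ⟨fun x A hA => (hτstat x).measure_preimage hA.nullMeasurableSet⟩
  have : ErgodicVAdd E Ω ℙ := ergodicVAdd_of_forall_preimage_vadd_eq μ fun A hA hinv =>
    (hτerg A hA hinv).imp_right (prob_compl_eq_zero_iff hA).2
  obtain ⟨Ω₂, Ω₂_ae, Ω₂_measurable, hΩ₂⟩ :=
    (ae_forall_tendsto_integral_mul_vadd μ hν₁ hν₂ hν₁_int hν₂_int).exists_measurable_mem
  refine ⟨Ω₂, Ω₂_measurable, (mem_ae_iff_prob_eq_one Ω₂_measurable).1 Ω₂_ae, ?_⟩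
  intro ω hω η hη f hf hf_bdd g hg hg_bdd hg_supp
  have kernel := isTestKernel_indicator_truncationSet_jumpKernel hΓ s hη hf hf_bdd hg hg_bdd
    (hg_supp.isCompact.isBounded.subset (subset_tsupport g))
  have rescaled_tendsto := (hΩ₂ ω hω _ kernel).comp tendsto_inv_nhdsGT_zero
  simp only [← integral_indicator (measurableSet_truncationSet hΓ η), indicator_mul_left]
  exact rescaled_tendsto

/-- **Proposition 3.1(ii)** (weak convergence of the truncated bilinear forms for
product-form coefficients).  If `𝔼[ν₁^p + ν₂^p] < ∞` for some `p > 1`, then almost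
surely, for every `η > 0`, every locally bounded measurable `f` and every bounded
measurable compactly supported `g`, the truncated bilinear form with coefficient
`ν₁(τ_{x/ε}ω)ν₂(τ_{y/ε}ω)` converges, as `ε → 0`, to `𝔼[ν₁]𝔼[ν₂]` times the
corresponding deterministic form. -/
theorem truncated_form_convergence_product
    {Ω : Type*} [MeasurableSpace Ω] (ℙ : Measure Ω) [IsProbabilityMeasure ℙ]
    (d : ℕ) (hd : 0 < d) (α : ℝ) (hα0 : 0 < α) (hα2 : α < 2)
    -- the stationary ergodic group of transformations
    (τ : Rd d → Ω → Ω)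
    (hτ0 : τ 0 = id)
    (hτadd : ∀ x y, τ x ∘ τ y = τ (x + y))
    (hτmeas : Measurable fun p : Rd d × Ω => τ p.1 p.2)
    (hτstat : ∀ x, MeasurePreserving (τ x) ℙ ℙ)
    (hτerg : ∀ A : Set Ω, MeasurableSet A → (∀ x, τ x ⁻¹' A = A) → ℙ A = 0 ∨ ℙ A = 1)
    -- the symmetric cone
    (Γ : Set (Rd d)) (hΓopen : IsOpen Γ) (hΓne : Γ.Nonempty)
    (hΓcone : ∀ x ∈ Γ, ∀ r : ℝ, r ≠ 0 → r • x ∈ Γ)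
    -- the random variables ν₁, ν₂ and the moment assumption
    (ν₁ ν₂ : Ω → ℝ) (hν₁meas : Measurable ν₁) (hν₂meas : Measurable ν₂)
    (hν₁nn : ∀ ω, 0 ≤ ν₁ ω) (hν₂nn : ∀ ω, 0 ≤ ν₂ ω)
    (p : ℝ) (hp : 1 < p)
    (hν₁mom : Integrable (fun ω => ν₁ ω ^ p) ℙ)
    (hν₂mom : Integrable (fun ω => ν₂ ω ^ p) ℙ) :
    ∃ Ω₂ : Set Ω, MeasurableSet Ω₂ ∧ ℙ Ω₂ = 1 ∧
      ∀ ω ∈ Ω₂, ∀ η : ℝ, 0 < η →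
      ∀ f : Rd d → ℝ, Measurable f →
        (∀ R : ℝ, 0 < R → ∃ M, ∀ x ∈ ball (0 : Rd d) R, |f x| ≤ M) →
      ∀ g : Rd d → ℝ, Measurable g → (∃ M, ∀ x, |g x| ≤ M) → HasCompactSupport g →
      Tendsto (fun ε : ℝ =>
          ∫ q in {q : Rd d × Rd d |
              η < ‖q.1 - q.2‖ ∧ ‖q.1 - q.2‖ < 1 / η ∧ q.1 - q.2 ∈ Γ},
            (f q.2 - f q.1) * (g q.2 - g q.1) / ‖q.1 - q.2‖ ^ ((d : ℝ) + α)
              * (ν₁ (τ (ε⁻¹ • q.1) ω) * ν₂ (τ (ε⁻¹ • q.2) ω)))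
        (𝓝[>] (0 : ℝ))
        (𝓝 ((∫ ω', ν₁ ω' ∂ℙ) * (∫ ω', ν₂ ω' ∂ℙ) *
          ∫ q in {q : Rd d × Rd d |
              η < ‖q.1 - q.2‖ ∧ ‖q.1 - q.2‖ < 1 / η ∧ q.1 - q.2 ∈ Γ},
            (f q.2 - f q.1) * (g q.2 - g q.1) / ‖q.1 - q.2‖ ^ ((d : ℝ) + α))) :=
  truncated_form_convergence_product_general volume ℙ τ hτ0 hτadd hτmeas hτstat hτerg
    hΓopen.measurableSet (d + α) hν₁meas hν₂meas
    (integrable_of_integrable_rpow hν₁meas.aestronglyMeasurable hν₁nn hp.le hν₁mom)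
    (integrable_of_integrable_rpow hν₂meas.aestronglyMeasurable hν₂nn hp.le hν₂mom)

end
end

section
/- Suppose there is a non-negative random variable Λ₂ on Ω with 𝔼[Λ₂] < ∞ such that for ℙ-a.e. ω, κ(x,y;ω) ≤ Λ₂(τ_x ω) + Λ₂(τ_y ω) for all x,y ∈ ℝ^d. Then there is a set Ω₁ ⊆ Ω of full ℙ-measure such that for every ω ∈ Ω₁ and every g ∈ C_c¹(ℝ^d): lim_{η→0} limsup_{ε→0} ∬_{{|x−y|≤η}} (g(x)−g(y))²·κ(x/ε,y/ε;ω)·|x−y|^{−(d+α)} dx dy = 0 and lim_{η→0} limsup_{ε→0} ∬_{{|x−y|≥1/η}} (g(x)−g(y))²·κ(x/ε,y/ε;ω)·|x−y|^{−(d+α)} dx dy = 0. -/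
open MeasureTheory Filter Metric Set
open scoped ENNReal Topology

noncomputable section

/-!
Write `Γ g` for the carré du champ of `g` restricted to jumps of the relevant size. By symmetry in
`x` and `y`, the domination of `κ` bounds the energy by `2 ∫ V_ε * Γ g`, where
`V_ε x = Λ₂ (τ_{x/ε} ω)`. The Hardy–Littlewood weak-type inequality on `ℝ^d`, averaged along the
orbits of the flow, becomes a maximal inequality on `Ω`; hence for almost every `ω` the averages of
`x ↦ Λ₂ (τ_x ω)` over all balls around the origin of radius at least one are bounded by a finite
`M`. Shrinking `ε` only enlarges the balls, so `V_ε` obeys the same bound for every `ε ≤ 1`.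

* Small jumps: `Γ g` is supported in a fixed ball and at most `L² ∫_{|h| ≤ η} |h|^{2-d-α} dh`,
  where `L` is a Lipschitz constant of `g`; this tends to zero with `η` since `α < 2`.
* Large jumps: one endpoint lies in the support of `g`, so `Γ g x` is controlled by the total mass
  of the jumps longer than `ρ` when `x` is in that support, and by the density `|x|^{-d-α}` on
  `|x| ≥ ρ` otherwise. Writing `|x|^{-d-α}` as an integral over the radii of balls containing `x`
  turns the bound on ball averages into a bound of order `M ρ^{-α}`.
-/

open Module (finrank)
open scoped NNReal

section NormedGroup

variable {E : Type*} [NormedAddCommGroup E]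

section Maximal

variable [MeasurableSpace E] {μ : Measure E}

/-- The Hardy–Littlewood maximal function over the centred balls of radii `1, …, N + 1`. Finitely
many radii suffice for averages at scales `≥ 1`, and keep the function measurable in any parameter
on which `f` depends. -/
def truncatedMaximal (μ : Measure E) (N : ℕ) (f : E → ℝ≥0∞) (x : E) : ℝ≥0∞ :=
  ⨆ n ≤ N, ⨍⁻ z in closedBall x (n + 1), f z ∂μ

lemma lt_truncatedMaximal_iff {N : ℕ} {f : E → ℝ≥0∞} {x : E} {c : ℝ≥0∞} :
    c < truncatedMaximal μ N f x ↔ ∃ n ≤ N, c < ⨍⁻ z in closedBall x (n + 1), f z ∂μ := by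
  simp only [truncatedMaximal, lt_iSup_iff, exists_prop]

lemma truncatedMaximal_mono (f : E → ℝ≥0∞) (x : E) : Monotone (truncatedMaximal μ · f x) :=
  fun _ _ hNN' => biSup_mono fun _ hn => hn.trans hNN'

variable [BorelSpace E]

lemma truncatedMaximal_congr {N : ℕ} {f g : E → ℝ≥0∞} {x : E}
    (h : EqOn f g (closedBall x (N + 1))) :
    truncatedMaximal μ N f x = truncatedMaximal μ N g x := by
  refine iSup_congr fun n => iSup_congr fun hn => ?_
  have hsub : closedBall x ((n : ℝ) + 1) ⊆ closedBall x (N + 1) :=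
    closedBall_subset_closedBall (by gcongr)
  simp only [setLAverage_eq, setLIntegral_congr_fun measurableSet_closedBall (h.mono hsub)]

lemma truncatedMaximal_orbit_vadd [μ.IsAddHaarMeasure] {Ω : Type*} [AddAction E Ω] (N : ℕ)
    (F : Ω → ℝ≥0∞) (x : E) (ω : Ω) :
    truncatedMaximal μ N (fun z => F (z +ᵥ x +ᵥ ω)) 0 =
      truncatedMaximal μ N (fun z => F (z +ᵥ ω)) x := by
  refine iSup_congr fun n => iSup_congr fun _ => ?_
  rw [setLAverage_eq, setLAverage_eq, Measure.addHaar_closedBall_center μ x,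
    ← (measurePreserving_add_right μ x).setLIntegral_comp_preimage_emb
      (measurableEmbedding_addRight x) _ (closedBall x _)]
  simp only [preimage_add_right_closedBall, sub_self, add_vadd]

variable [NormedSpace ℝ E] [FiniteDimensional ℝ E] [μ.IsAddHaarMeasure]

lemma mul_measure_lt_truncatedMaximal_le (f : E → ℝ≥0∞) (c : ℝ≥0∞) (N : ℕ) :
    c * μ {x | c < truncatedMaximal μ N f x} ≤ 5 ^ finrank ℝ E * ∫⁻ x, f x ∂μ := by
  let t : Set (E × ℕ) := {p | p.2 ≤ N ∧ c < ⨍⁻ z in closedBall p.1 (p.2 + 1), f z ∂μ}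
  obtain ⟨u, hut, hdisj, hcover⟩ :=
    Vitali.exists_disjoint_subfamily_covering_enlargement_closedBall t Prod.fst
      (fun p => (p.2 + 1 : ℝ)) (N + 1) (fun p hp => by gcongr; exact hp.1) 5 (by norm_num)
  have hcount : u.Countable := hdisj.countable_of_nonempty_interior fun p _ =>
    ⟨p.1, ball_subset_interior_closedBall (mem_ball_self (by positivity))⟩
  have : Countable u := hcount.to_subtype
  have hsub : {x | c < truncatedMaximal μ N f x} ⊆
      ⋃ p ∈ u, closedBall p.1 (5 * (p.2 + 1)) := by
    intro x hx
    obtain ⟨n, hn, hlt⟩ := lt_truncatedMaximal_iff.1 hx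
    obtain ⟨p, hp, hxp⟩ := hcover (x, n) ⟨hn, hlt⟩
    exact mem_biUnion hp (hxp (mem_closedBall_self (by positivity)))
  have hball (p : u) : c * μ (closedBall p.1.1 (p.1.2 + 1)) ≤
      ∫⁻ z in closedBall p.1.1 (p.1.2 + 1), f z ∂μ :=
    ENNReal.mul_le_of_le_div ((hut p.2).2.le.trans_eq (setLAverage_eq _ _ _))
  calc c * μ {x | c < truncatedMaximal μ N f x}
      ≤ c * ∑' p : u, μ (closedBall p.1.1 (5 * (p.1.2 + 1))) := by
        gcongr
        exact (measure_mono hsub).trans (measure_biUnion_le _ hcount _)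
    _ = 5 ^ finrank ℝ E * ∑' p : u, c * μ (closedBall p.1.1 (p.1.2 + 1)) := by
        simp_rw [← ENNReal.tsum_mul_left]
        congr! 2 with p
        rw [Measure.addHaar_closedBall_mul μ _ (by norm_num) (by positivity),
          Measure.addHaar_closedBall_center μ p.1.1, ENNReal.ofReal_pow (by norm_num),
          ENNReal.ofReal_ofNat]
        ring
    _ ≤ 5 ^ finrank ℝ E * ∑' p : u, ∫⁻ z in closedBall p.1.1 (p.1.2 + 1), f z ∂μ := by
        gcongr with p
        exact hball p
    _ = 5 ^ finrank ℝ E * ∫⁻ z in ⋃ p ∈ u, closedBall p.1 (p.2 + 1), f z ∂μ := by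
        rw [lintegral_biUnion hcount (fun _ _ => measurableSet_closedBall) hdisj]
    _ ≤ 5 ^ finrank ℝ E * ∫⁻ x, f x ∂μ := by
        gcongr
        exact Measure.restrict_le_self

lemma mul_measure_closedBall_inter_lt_truncatedMaximal_le (f : E → ℝ≥0∞) (c : ℝ≥0∞) (N : ℕ) :
    c * μ (closedBall 0 (N + 1) ∩ {x | c < truncatedMaximal μ N f x}) ≤
      5 ^ finrank ℝ E * ∫⁻ x in closedBall 0 (2 * (N + 1)), f x ∂μ := by
  have hsub : closedBall 0 (N + 1) ∩ {x | c < truncatedMaximal μ N f x} ⊆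
      {x | c < truncatedMaximal μ N ((closedBall 0 (2 * (N + 1))).indicator f) x} := by
    rintro x ⟨hxN, hx⟩
    have hball : closedBall x ((N : ℝ) + 1) ⊆ closedBall 0 (2 * (N + 1)) :=
      closedBall_subset_closedBall' (by linarith [mem_closedBall.1 hxN])
    exact hx.trans_eq (truncatedMaximal_congr fun z hz => (indicator_of_mem (hball hz) f).symm)
  calc c * μ (closedBall 0 (N + 1) ∩ {x | c < truncatedMaximal μ N f x})
      ≤ c * μ {x | c < truncatedMaximal μ N ((closedBall 0 (2 * (N + 1))).indicator f) x} := by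
        gcongr
    _ ≤ 5 ^ finrank ℝ E * ∫⁻ x in closedBall 0 (2 * (N + 1)), f x ∂μ := by
        rw [← lintegral_indicator measurableSet_closedBall]
        exact mul_measure_lt_truncatedMaximal_le _ c N

end Maximal

section Orbits

variable [MeasurableSpace E] {μ : Measure E}
  {Ω : Type*} [MeasurableSpace Ω] [AddAction E Ω] [MeasurableVAdd₂ E Ω] {F : Ω → ℝ≥0∞}

lemma measurable_truncatedMaximal_orbit [SFinite μ] (hF : Measurable F) (N : ℕ) (x : E) :
    Measurable fun ω => truncatedMaximal μ N (fun z => F (z +ᵥ ω)) x := by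
  simp only [truncatedMaximal, setLAverage_eq]
  have hFvadd : Measurable fun p : E × Ω => F (p.1 +ᵥ p.2) := by fun_prop
  exact .iSup fun n => .iSup fun _ => hFvadd.lintegral_prod_left'.div_const _

variable {ℙ : Measure Ω} [SFinite ℙ] [VAddInvariantMeasure E Ω ℙ]

lemma lintegral_setLIntegral_orbit [SFinite μ] (hF : Measurable F) (s : Set E) :
    ∫⁻ ω, ∫⁻ x in s, F (x +ᵥ ω) ∂μ ∂ℙ = μ s * ∫⁻ ω, F ω ∂ℙ := by
  rw [lintegral_lintegral_swap (by fun_prop)]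
  simp_rw [(measurePreserving_vadd _ ℙ).lintegral_comp hF, setLIntegral_const, mul_comm]

variable [BorelSpace E] [NormedSpace ℝ E] [FiniteDimensional ℝ E] [μ.IsAddHaarMeasure]

lemma mul_setLIntegral_indicator_lt_truncatedMaximal_orbit_le (hF : Measurable F) (c : ℝ≥0∞)
    (N : ℕ) (ω : Ω) :
    c * ∫⁻ x in closedBall (0 : E) (N + 1),
        {ω | c < truncatedMaximal μ N (fun z => F (z +ᵥ ω)) (0 : E)}.indicator 1 (x +ᵥ ω) ∂μ ≤
      5 ^ finrank ℝ E * ∫⁻ x in closedBall (0 : E) (2 * (N + 1)), F (x +ᵥ ω) ∂μ := by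
  set A : Set Ω := {ω | c < truncatedMaximal μ N (fun z => F (z +ᵥ ω)) (0 : E)} with hA
  have hpre : MeasurableSet ((fun x : E => x +ᵥ ω) ⁻¹' A) :=
    (measurableSet_lt measurable_const (measurable_truncatedMaximal_orbit hF N 0)).preimage
      (by fun_prop)
  have hpre_eq : (fun x : E => x +ᵥ ω) ⁻¹' A =
      {x | c < truncatedMaximal μ N (fun z => F (z +ᵥ ω)) x} := by
    ext x
    simp only [hA, mem_preimage, mem_ofPred_eq, truncatedMaximal_orbit_vadd]
  have hind : ∫⁻ x in closedBall (0 : E) (N + 1), A.indicator 1 (x +ᵥ ω) ∂μ =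
      μ (closedBall 0 (N + 1) ∩ (fun x => x +ᵥ ω) ⁻¹' A) := by
    rw [inter_comm, ← Measure.restrict_apply hpre, ← lintegral_indicator_one hpre]
    rfl
  rw [hind, hpre_eq]
  exact mul_measure_closedBall_inter_lt_truncatedMaximal_le _ c N

lemma mul_measure_lt_truncatedMaximal_orbit_le (hF : Measurable F) (c : ℝ≥0∞) (N : ℕ) :
    c * ℙ {ω | c < truncatedMaximal μ N (fun z => F (z +ᵥ ω)) (0 : E)} ≤
      10 ^ finrank ℝ E * ∫⁻ ω, F ω ∂ℙ := by
  set A : Set Ω := {ω | c < truncatedMaximal μ N (fun z => F (z +ᵥ ω)) (0 : E)}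
  have hAm : MeasurableSet A :=
    measurableSet_lt measurable_const (measurable_truncatedMaximal_orbit hF N 0)
  have hvol : μ (closedBall (0 : E) (2 * (N + 1))) =
      2 ^ finrank ℝ E * μ (closedBall (0 : E) (N + 1)) := by
    rw [Measure.addHaar_closedBall_mul μ _ (by norm_num) (by positivity),
      ENNReal.ofReal_pow (by norm_num), ENNReal.ofReal_ofNat]
  rw [← ENNReal.mul_le_mul_iff_right (a := μ (closedBall (0 : E) (N + 1)))
    (measure_closedBall_pos μ _ (by positivity)).ne' measure_closedBall_lt_top.ne]
  calc μ (closedBall (0 : E) (N + 1)) * (c * ℙ A)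
      = ∫⁻ ω, c * ∫⁻ x in closedBall (0 : E) (N + 1), A.indicator 1 (x +ᵥ ω) ∂μ ∂ℙ := by
        have hAind : Measurable (A.indicator (1 : Ω → ℝ≥0∞)) := measurable_one.indicator hAm
        have hAvadd : Measurable fun p : E × Ω => A.indicator (1 : Ω → ℝ≥0∞) (p.1 +ᵥ p.2) := by
          fun_prop
        rw [lintegral_const_mul _ hAvadd.lintegral_prod_left',
          lintegral_setLIntegral_orbit hAind, lintegral_indicator_one hAm, mul_left_comm]
    _ ≤ ∫⁻ ω, 5 ^ finrank ℝ E *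
          ∫⁻ x in closedBall (0 : E) (2 * (N + 1)), F (x +ᵥ ω) ∂μ ∂ℙ :=
        lintegral_mono (mul_setLIntegral_indicator_lt_truncatedMaximal_orbit_le hF c N)
    _ = 5 ^ finrank ℝ E * (2 ^ finrank ℝ E * μ (closedBall (0 : E) (N + 1)) *
          ∫⁻ ω, F ω ∂ℙ) := by
        rw [lintegral_const_mul' _ _ (by finiteness), lintegral_setLIntegral_orbit hF, hvol]
    _ = μ (closedBall (0 : E) (N + 1)) * (10 ^ finrank ℝ E * ∫⁻ ω, F ω ∂ℙ) := by
        rw [show (10 : ℝ≥0∞) = 5 * 2 by norm_num, mul_pow]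
        ring

lemma ae_iSup_truncatedMaximal_orbit_lt_top (hF : Measurable F) (hF_fin : ∫⁻ ω, F ω ∂ℙ ≠ ∞) :
    ∀ᵐ ω ∂ℙ, ⨆ N, truncatedMaximal μ N (fun z => F (z +ᵥ ω)) (0 : E) < ∞ := by
  have hweak (n : ℕ) :
      n * ℙ {ω | ⨆ N, truncatedMaximal μ N (fun z => F (z +ᵥ ω)) (0 : E) = ∞} ≤
      10 ^ finrank ℝ E * ∫⁻ ω, F ω ∂ℙ := by
    have hmono : Monotone fun N =>
        {ω | (n : ℝ≥0∞) < truncatedMaximal μ N (fun z => F (z +ᵥ ω)) (0 : E)} :=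
      fun _ _ hN _ h => h.trans_le (truncatedMaximal_mono _ _ hN)
    have hsub : {ω | ⨆ N, truncatedMaximal μ N (fun z => F (z +ᵥ ω)) (0 : E) = ∞} ⊆
        ⋃ N, {ω | (n : ℝ≥0∞) < truncatedMaximal μ N (fun z => F (z +ᵥ ω)) (0 : E)} :=
      fun ω hω => mem_iUnion.2 (lt_iSup_iff.1 ((ENNReal.natCast_lt_top n).trans_eq hω.symm))
    refine (mul_le_mul_right (measure_mono hsub) _).trans ?_
    rw [hmono.measure_iUnion, ENNReal.mul_iSup]
    exact iSup_le fun N => mul_measure_lt_truncatedMaximal_orbit_le hF n N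
  simp only [ae_iff, not_lt, top_le_iff]
  by_contra hne
  obtain ⟨n, hn⟩ := ENNReal.exists_nat_mul_gt hne
    (b := 10 ^ finrank ℝ E * ∫⁻ ω, F ω ∂ℙ) (by finiteness)
  exact hn.not_ge (hweak n)

end Orbits

section BallAverages

variable [MeasurableSpace E] {μ : Measure E}

/-- The averages of `V` over the balls of radius at least `1` around the origin are at most `M`:
`V` is allowed to be wild locally, but not to have large mass at large scales. -/
def BallAveragesLE (μ : Measure E) (V : E → ℝ≥0∞) (M : ℝ≥0∞) : Prop :=
  ∀ r : ℝ, 1 ≤ r → ∫⁻ x in closedBall 0 r, V x ∂μ ≤ M * μ (closedBall 0 r)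

lemma ballAveragesLE_one : BallAveragesLE μ 1 1 := fun r _ => by
  simp only [Pi.one_apply, setLIntegral_one, one_mul, le_refl]

variable [BorelSpace E] [NormedSpace ℝ E] [FiniteDimensional ℝ E] [μ.IsAddHaarMeasure]

lemma BallAveragesLE.comp_smul {V : E → ℝ≥0∞} {M : ℝ≥0∞} (hVM : BallAveragesLE μ V M)
    {c : ℝ} (hc : 1 ≤ c) : BallAveragesLE μ (fun x => V (c • x)) M := by
  intro r hr
  have hc0 : c ≠ 0 := by positivity
  have hemb : MeasurableEmbedding fun x : E => c • x := measurableEmbedding_const_smul₀ hc0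
  have hpre : (fun x : E => c • x) ⁻¹' closedBall 0 (c * r) = closedBall 0 r := by
    rw [preimage_smul₀ hc0, smul_closedBall' (inv_ne_zero hc0), smul_zero, norm_inv,
      Real.norm_of_nonneg (by positivity), inv_mul_cancel_left₀ hc0]
  have hmap (s : Set E) : ∫⁻ x in (fun x : E => c • x) ⁻¹' s, V (c • x) ∂μ =
      ENNReal.ofReal |(c ^ finrank ℝ E)⁻¹| * ∫⁻ x in s, V x ∂μ := by
    rw [← smul_eq_mul, ← lintegral_smul_measure, ← Measure.restrict_smul,
      ← Measure.map_addHaar_smul μ hc0, hemb.restrict_map, hemb.lintegral_map]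
  calc ∫⁻ x in closedBall 0 r, V (c • x) ∂μ
      = ENNReal.ofReal |(c ^ finrank ℝ E)⁻¹| * ∫⁻ x in closedBall 0 (c * r), V x ∂μ := by
        rw [← hpre, hmap]
    _ ≤ ENNReal.ofReal |(c ^ finrank ℝ E)⁻¹| * (M * μ (closedBall 0 (c * r))) := by
        gcongr
        exact hVM _ (one_le_mul_of_one_le_of_one_le hc hr)
    _ = M * μ (closedBall 0 r) := by
        rw [mul_left_comm, ← Measure.addHaar_preimage_smul μ hc0, hpre]

lemma ballAveragesLE_iSup_truncatedMaximal (f : E → ℝ≥0∞) :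
    BallAveragesLE μ f (2 ^ finrank ℝ E * ⨆ N, truncatedMaximal μ N f 0) := by
  intro r hr
  set n : ℕ := ⌊r⌋₊
  have hrn : r ≤ n + 1 := (Nat.lt_floor_add_one r).le
  have hnr : (n : ℝ) + 1 ≤ 2 * r := by linarith [Nat.floor_le (zero_le_one.trans hr)]
  have hball0 : μ (closedBall (0 : E) (n + 1)) ≠ 0 :=
    (measure_closedBall_pos μ _ (by positivity)).ne'
  calc ∫⁻ x in closedBall 0 r, f x ∂μ
      ≤ ∫⁻ x in closedBall 0 (n + 1 : ℝ), f x ∂μ :=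
        lintegral_mono_set (closedBall_subset_closedBall hrn)
    _ = (⨍⁻ x in closedBall 0 (n + 1 : ℝ), f x ∂μ) * μ (closedBall 0 (n + 1 : ℝ)) := by
        rw [setLAverage_eq, ENNReal.div_mul_cancel hball0 measure_closedBall_lt_top.ne]
    _ ≤ (⨆ N, truncatedMaximal μ N f 0) * μ (closedBall 0 (2 * r)) := by
        gcongr
        exact le_iSup_of_le n (le_iSup₂_of_le (f := fun m (_ : m ≤ n) => _) n le_rfl le_rfl)
    _ = 2 ^ finrank ℝ E * (⨆ N, truncatedMaximal μ N f 0) * μ (closedBall 0 r) := by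
        rw [Measure.addHaar_closedBall_mul μ _ (by norm_num) (by positivity),
          ENNReal.ofReal_pow (by norm_num), ENNReal.ofReal_ofNat]
        ring

lemma ae_exists_ballAveragesLE_orbit {Ω : Type*} [MeasurableSpace Ω] [AddAction E Ω]
    [MeasurableVAdd₂ E Ω] {ℙ : Measure Ω} [SFinite ℙ] [VAddInvariantMeasure E Ω ℙ]
    {F : Ω → ℝ≥0∞} (hF : Measurable F) (hF_fin : ∫⁻ ω, F ω ∂ℙ ≠ ∞) :
    ∀ᵐ ω ∂ℙ, ∃ M ≠ ∞, BallAveragesLE μ (fun x => F (x +ᵥ ω)) M := by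
  filter_upwards [ae_iSup_truncatedMaximal_orbit_lt_top (μ := μ) hF hF_fin] with ω hω
  exact ⟨_, ENNReal.mul_ne_top (by finiteness) hω.ne, ballAveragesLE_iSup_truncatedMaximal _⟩

end BallAverages

section LevyDensity

/-- The density `‖h‖ ^ (-s)` of the jump measure of a stable-like process, restricted to the jumps
whose length belongs to `I`. The convention `0⁻¹ = 0` makes it finite at `h = 0`, where the energies
below carry a vanishing factor. -/
def levyDensity (s : ℝ) (I : Set ℝ) (h : E) : ℝ≥0∞ :=
  I.indicator (fun r => ENNReal.ofReal (r ^ s)⁻¹) ‖h‖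

variable {s : ℝ} {I : Set ℝ}

lemma levyDensity_sub_comm (x y : E) : levyDensity s I (x - y) = levyDensity s I (y - x) := by
  rw [levyDensity, levyDensity, norm_sub_rev]

lemma levyDensity_eq_zero {h : E} (hh : ‖h‖ ∉ I) : levyDensity s I h = 0 :=
  indicator_of_notMem hh _

lemma measurable_levyDensity [MeasurableSpace E] [OpensMeasurableSpace E] (hI : MeasurableSet I) :
    Measurable (levyDensity (E := E) s I) :=
  .comp (g := I.indicator fun r => ENNReal.ofReal (r ^ s)⁻¹) (.indicator (by fun_prop) hI)
    measurable_norm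

lemma enorm_sub_sq_mul_mul_levyDensity_le {g : E → ℝ} {V : E → ℝ≥0∞} {K : E → E → ℝ}
    (hK : ∀ x y, ‖K x y‖ₑ ≤ V x + V y) {p : E × E} (hp : ‖p.1 - p.2‖ ∈ I) :
    ‖(g p.1 - g p.2) ^ 2 * K p.1 p.2 / ‖p.1 - p.2‖ ^ s‖ₑ ≤
      (V p.1 + V p.2) * (‖g p.1 - g p.2‖ₑ ^ 2 * levyDensity s I (p.1 - p.2)) := by
  rw [levyDensity, indicator_of_mem hp, div_eq_mul_inv, enorm_mul, enorm_mul, enorm_pow,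
    Real.enorm_of_nonneg (inv_nonneg.2 (Real.rpow_nonneg (norm_nonneg _) _)), mul_right_comm,
    mul_comm (V _ + V _)]
  gcongr
  exact hK _ _

end LevyDensity

section JumpEnergy

variable [MeasurableSpace E] {μ : Measure E}

/-- The carré du champ of `g` with respect to `levyDensity s I`. -/
def carreDuChamp (μ : Measure E) (s : ℝ) (I : Set ℝ) (g : E → ℝ) (x : E) : ℝ≥0∞ :=
  ∫⁻ y, ‖g x - g y‖ₑ ^ 2 * levyDensity s I (x - y) ∂μ

/-- The contribution of the jumps of length in `I` to the energy of `g` in the nonlocal quadratic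
form with jump kernel `K x y * ‖x - y‖ ^ (-s)`. -/
def jumpEnergy (μ : Measure E) (s : ℝ) (I : Set ℝ) (g : E → ℝ) (K : E → E → ℝ) : ℝ :=
  ∫ p in {p : E × E | ‖p.1 - p.2‖ ∈ I},
    (g p.1 - g p.2) ^ 2 * K p.1 p.2 / ‖p.1 - p.2‖ ^ s ∂(μ.prod μ)

lemma enorm_jumpEnergy_le [BorelSpace E] [SecondCountableTopology E] [SFinite μ] {s : ℝ}
    {I : Set ℝ} (hI : MeasurableSet I) {g : E → ℝ} (hg : Measurable g) {V : E → ℝ≥0∞}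
    (hV : Measurable V) {K : E → E → ℝ} (hK : ∀ x y, ‖K x y‖ₑ ≤ V x + V y) :
    ‖jumpEnergy μ s I g K‖ₑ ≤ 2 * ∫⁻ x, V x * carreDuChamp μ s I g x ∂μ := by
  let W : E × E → ℝ≥0∞ := fun p => ‖g p.1 - g p.2‖ₑ ^ 2 * levyDensity s I (p.1 - p.2)
  have hW : Measurable W := by
    have := measurable_levyDensity (E := E) (s := s) hI
    fun_prop
  have hW_swap (p : E × E) : W p.swap = W p := by
    simp only [W, Prod.fst_swap, Prod.snd_swap, levyDensity_sub_comm p.2, enorm_sub_rev (g p.2)]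
  have hswap : ∫⁻ p, V p.2 * W p ∂(μ.prod μ) = ∫⁻ p, V p.1 * W p ∂(μ.prod μ) := by
    rw [← lintegral_prod_swap]
    simp only [hW_swap, Prod.snd_swap]
  calc ‖jumpEnergy μ s I g K‖ₑ
      ≤ ∫⁻ p in {p : E × E | ‖p.1 - p.2‖ ∈ I},
          ‖(g p.1 - g p.2) ^ 2 * K p.1 p.2 / ‖p.1 - p.2‖ ^ s‖ₑ ∂(μ.prod μ) :=
        enorm_integral_le_lintegral_enorm _
    _ ≤ ∫⁻ p in {p : E × E | ‖p.1 - p.2‖ ∈ I}, (V p.1 + V p.2) * W p ∂(μ.prod μ) :=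
        setLIntegral_mono (by fun_prop) fun p hp => enorm_sub_sq_mul_mul_levyDensity_le hK hp
    _ ≤ ∫⁻ p, (V p.1 + V p.2) * W p ∂(μ.prod μ) := setLIntegral_le_lintegral _ _
    _ = 2 * ∫⁻ p, V p.1 * W p ∂(μ.prod μ) := by
        simp_rw [add_mul]
        rw [lintegral_add_left (by fun_prop), hswap, two_mul]
    _ = 2 * ∫⁻ x, V x * carreDuChamp μ s I g x ∂μ := by
        have hfibre (x : E) : ∫⁻ y, V x * W (x, y) ∂μ = V x * carreDuChamp μ s I g x :=
          lintegral_const_mul _ (hW.comp measurable_prodMk_left)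
        have hVW : Measurable fun p => V p.1 * W p := (hV.comp measurable_fst).mul hW
        rw [lintegral_prod _ hVW.aemeasurable]
        simp only [hfibre]

end JumpEnergy

section Tail

lemma lintegral_Ioi_mul_rpow {p t : ℝ} (hp : 0 < p) (ht : 0 < t) :
    ∫⁻ r in Ioi t, ENNReal.ofReal (p * r ^ (-p - 1)) = ENNReal.ofReal (t ^ (-p)) := by
  have hexp : -p - 1 < -1 := by linarith
  have hnonneg : 0 ≤ᵐ[volume.restrict (Ioi t)] fun r => p * r ^ (-p - 1) :=
    ae_restrict_of_forall_mem measurableSet_Ioi fun r hr =>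
      mul_nonneg hp.le (Real.rpow_nonneg (ht.trans hr).le _)
  rw [← ofReal_integral_eq_lintegral_ofReal
    ((integrableOn_Ioi_rpow_of_lt hexp ht).const_mul p) hnonneg, integral_const_mul,
    integral_Ioi_rpow_of_lt hexp ht, sub_add_cancel, neg_div_neg_eq, mul_div_cancel₀ _ hp.ne']

lemma levyDensity_Ici_le_lintegral {p ρ : ℝ} (hp : 0 < p) (hρ : 0 < ρ) (x : E) :
    levyDensity p (Ici ρ) x ≤
      ∫⁻ r in Ioi ρ, (closedBall 0 r).indicator 1 x * ENNReal.ofReal (p * r ^ (-p - 1)) := by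
  by_cases hx : ρ ≤ ‖x‖
  · calc levyDensity p (Ici ρ) x
        = ∫⁻ r in Ioi ‖x‖, ENNReal.ofReal (p * r ^ (-p - 1)) := by
          rw [lintegral_Ioi_mul_rpow hp (hρ.trans_le hx), Real.rpow_neg (norm_nonneg x)]
          exact indicator_of_mem (mem_Ici.2 hx) _
      _ = ∫⁻ r in Ioi ‖x‖,
            (closedBall 0 r).indicator 1 x * ENNReal.ofReal (p * r ^ (-p - 1)) :=
          setLIntegral_congr_fun measurableSet_Ioi fun r hr => by
            rw [indicator_of_mem (mem_closedBall_zero_iff.2 (mem_Ioi.1 hr).le), Pi.one_apply,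
              one_mul]
      _ ≤ _ := lintegral_mono_set (Ioi_subset_Ioi hx)
  · exact (levyDensity_eq_zero hx).trans_le zero_le

lemma measurable_indicator_closedBall_one [MeasurableSpace E] [OpensMeasurableSpace E] :
    Measurable fun q : E × ℝ => (closedBall 0 q.2).indicator (1 : E → ℝ≥0∞) q.1 := by
  have heq : (fun q : E × ℝ => (closedBall 0 q.2).indicator (1 : E → ℝ≥0∞) q.1) =
      {q | ‖q.1‖ ≤ q.2}.indicator 1 := by
    ext q
    by_cases hq : ‖q.1‖ ≤ q.2 <;> simp [hq]
  rw [heq]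
  exact measurable_one.indicator (measurableSet_le (by fun_prop) (by fun_prop))

variable [MeasurableSpace E] [BorelSpace E] [NormedSpace ℝ E] [FiniteDimensional ℝ E]
  {μ : Measure E} [μ.IsAddHaarMeasure]

lemma BallAveragesLE.setLIntegral_closedBall_mul_rpow_le {V : E → ℝ≥0∞} {M : ℝ≥0∞}
    (hVM : BallAveragesLE μ V M) {p r : ℝ} (hr : 1 ≤ r) :
    (∫⁻ x in closedBall 0 r, V x ∂μ) * ENNReal.ofReal (p * r ^ (-p - 1)) ≤
      M * μ (closedBall 0 1) * ENNReal.ofReal (p * r ^ (finrank ℝ E - p - 1)) := by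
  have hr0 : 0 < r := by positivity
  calc (∫⁻ x in closedBall 0 r, V x ∂μ) * ENNReal.ofReal (p * r ^ (-p - 1))
      ≤ M * μ (closedBall 0 r) * ENNReal.ofReal (p * r ^ (-p - 1)) := by
        gcongr
        exact hVM r hr
    _ = M * μ (closedBall 0 1) *
          (ENNReal.ofReal (r ^ finrank ℝ E) * ENNReal.ofReal (p * r ^ (-p - 1))) := by
        rw [Measure.addHaar_closedBall' μ _ hr0.le]
        ring
    _ = M * μ (closedBall 0 1) * ENNReal.ofReal (p * r ^ (finrank ℝ E - p - 1)) := by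
        rw [← ENNReal.ofReal_mul (pow_nonneg hr0.le _), ← Real.rpow_natCast, mul_left_comm,
          ← Real.rpow_add hr0]
        ring_nf

lemma BallAveragesLE.lintegral_mul_levyDensity_Ici_le {V : E → ℝ≥0∞} (hV : Measurable V)
    {M : ℝ≥0∞} (hVM : BallAveragesLE μ V M) {α ρ : ℝ} (hα : 0 < α) (hρ : 1 ≤ ρ) :
    ∫⁻ x, V x * levyDensity (finrank ℝ E + α) (Ici ρ) x ∂μ ≤
      M * μ (closedBall 0 1) * ENNReal.ofReal ((finrank ℝ E + α) / α * ρ ^ (-α)) := by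
  set p : ℝ := finrank ℝ E + α
  have hp0 : 0 < p := by positivity
  have hρ0 : 0 < ρ := by positivity
  let w : ℝ → ℝ≥0∞ := fun r => ENNReal.ofReal (p * r ^ (-p - 1))
  have hVball (x : E) (r : ℝ) :
      V x * ((closedBall 0 r).indicator 1 x * w r) = (closedBall 0 r).indicator V x * w r := by
    by_cases hx : x ∈ closedBall 0 r <;> simp [hx]
  calc ∫⁻ x, V x * levyDensity p (Ici ρ) x ∂μ
      ≤ ∫⁻ x, ∫⁻ r in Ioi ρ, V x * ((closedBall 0 r).indicator 1 x * w r) ∂volume ∂μ := by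
        refine lintegral_mono fun x => le_trans ?_ (lintegral_const_mul_le _ _)
        gcongr
        exact levyDensity_Ici_le_lintegral hp0 hρ0 x
    _ = ∫⁻ r in Ioi ρ, (∫⁻ x in closedBall 0 r, V x ∂μ) * w r := by
        have hball := measurable_indicator_closedBall_one (E := E)
        rw [lintegral_lintegral_swap (by fun_prop)]
        refine lintegral_congr fun r => ?_
        simp_rw [hVball]
        rw [lintegral_mul_const _ (hV.indicator measurableSet_closedBall),
          lintegral_indicator measurableSet_closedBall]
    _ ≤ ∫⁻ r in Ioi ρ, M * μ (closedBall 0 1) * ENNReal.ofReal (p * r ^ (-α - 1)) := by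
        refine setLIntegral_mono (by fun_prop) fun r hr => ?_
        convert hVM.setLIntegral_closedBall_mul_rpow_le (hρ.trans (mem_Ioi.1 hr).le) using 5
        ring
    _ = M * μ (closedBall 0 1) * ENNReal.ofReal (p / α * ρ ^ (-α)) := by
        have hpα (r : ℝ) : ENNReal.ofReal (p * r ^ (-α - 1)) =
            ENNReal.ofReal (p / α) * ENNReal.ofReal (α * r ^ (-α - 1)) := by
          rw [← ENNReal.ofReal_mul (by positivity), ← mul_assoc, div_mul_cancel₀ _ hα.ne']
        simp_rw [hpα]
        rw [lintegral_const_mul _ (by fun_prop), lintegral_const_mul _ (by fun_prop),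
          lintegral_Ioi_mul_rpow hα hρ0, ← ENNReal.ofReal_mul (by positivity)]

end Tail

section CarreDuChamp

lemma levyDensity_sub_Ici_le {s ρ : ℝ} (hs : 0 ≤ s) (hρ : 0 < ρ) {x y : E}
    (hy : y ∈ closedBall 0 ρ) :
    levyDensity s (Ici (2 * ρ)) (x - y) ≤ ENNReal.ofReal (2 ^ s) * levyDensity s (Ici ρ) x := by
  by_cases hxy : 2 * ρ ≤ ‖x - y‖
  · have hyρ : ‖y‖ ≤ ρ := mem_closedBall_zero_iff.1 hy
    have hx : ρ ≤ ‖x‖ := by linarith [norm_sub_le x y]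
    have hx0 : 0 < ‖x‖ := hρ.trans_le hx
    have hle : ‖x‖ / 2 ≤ ‖x - y‖ := by linarith [norm_le_norm_add_norm_sub' x y]
    rw [levyDensity, levyDensity, indicator_of_mem (mem_Ici.2 hxy), indicator_of_mem (mem_Ici.2 hx),
      ← ENNReal.ofReal_mul (by positivity)]
    gcongr
    calc (‖x - y‖ ^ s)⁻¹ ≤ ((‖x‖ / 2) ^ s)⁻¹ := by gcongr
      _ = 2 ^ s * (‖x‖ ^ s)⁻¹ := by
        rw [Real.div_rpow hx0.le zero_le_two, inv_div, div_eq_mul_inv]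
  · exact (levyDensity_eq_zero hxy).trans_le zero_le

lemma lintegral_indicator_mul_levyDensity_sub_Ici_le [MeasurableSpace E] [OpensMeasurableSpace E]
    {μ : Measure E} {s R ρ : ℝ} (hs : 0 ≤ s) (hρ : 0 < ρ) (hRρ : R ≤ ρ) (x : E) :
    ∫⁻ y, (closedBall 0 R).indicator 1 y * levyDensity s (Ici (2 * ρ)) (x - y) ∂μ ≤
      μ (closedBall 0 R) * (ENNReal.ofReal (2 ^ s) * levyDensity s (Ici ρ) x) := by
  rw [mul_comm (μ _), ← lintegral_indicator_const measurableSet_closedBall]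
  refine lintegral_mono fun y => ?_
  by_cases hy : y ∈ closedBall 0 R
  · simp only [indicator_of_mem hy, Pi.one_apply, one_mul]
    exact levyDensity_sub_Ici_le hs hρ (closedBall_subset_closedBall hRρ hy)
  · simp only [indicator_of_notMem hy, zero_mul, le_refl]

lemma levyDensity_mono {s : ℝ} {I J : Set ℝ} (hIJ : I ⊆ J) (h : E) :
    levyDensity s I h ≤ levyDensity s J h :=
  indicator_le_indicator_of_subset hIJ (fun _ => zero_le) _

lemma enorm_sub_sq_le_indicator {g : E → ℝ} {R : ℝ} (hgR : ∀ x ∉ closedBall 0 R, g x = 0)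
    {G : ℝ≥0∞} (hgG : ∀ x, ‖g x‖ₑ ≤ G) (x y : E) :
    ‖g x - g y‖ₑ ^ 2 ≤
      (2 * G) ^ 2 * ((closedBall 0 R).indicator 1 x + (closedBall 0 R).indicator 1 y) := by
  by_cases hxy : x ∈ closedBall 0 R ∨ y ∈ closedBall 0 R
  · have hone : (1 : ℝ≥0∞) ≤ (closedBall 0 R).indicator 1 x + (closedBall 0 R).indicator 1 y := by
      rcases hxy with h | h
      · simp only [indicator_of_mem h, Pi.one_apply, le_self_add]
      · simp only [indicator_of_mem h, Pi.one_apply, le_add_self]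
    calc ‖g x - g y‖ₑ ^ 2 ≤ (2 * G) ^ 2 := by
          gcongr
          exact enorm_sub_le.trans ((add_le_add (hgG x) (hgG y)).trans_eq (two_mul G).symm)
      _ ≤ _ := le_mul_of_one_le_right' hone
  · push Not at hxy
    simp [hgR x hxy.1, hgR y hxy.2]

variable [MeasurableSpace E] [BorelSpace E] {μ : Measure E} [μ.IsAddLeftInvariant]
  [μ.IsNegInvariant] {s : ℝ} {g : E → ℝ} {R : ℝ} (hgR : ∀ x ∉ closedBall 0 R, g x = 0)
include hgR

lemma carreDuChamp_Iic_le {L : ℝ≥0} (hgL : LipschitzWith L g) (η : ℝ) (x : E) :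
    carreDuChamp μ s (Iic η) g x ≤ (closedBall 0 (R + η)).indicator
      (fun _ => L ^ 2 * ∫⁻ h, ‖h‖ₑ ^ 2 * levyDensity s (Iic η) h ∂μ) x := by
  by_cases hx : x ∈ closedBall 0 (R + η)
  · rw [indicator_of_mem hx, ← lintegral_const_mul' _ _ (by finiteness),
      ← lintegral_sub_left_eq_self _ x]
    refine lintegral_mono fun y => ?_
    rw [← mul_assoc, ← mul_pow]
    gcongr
    rw [← edist_eq_enorm_sub, ← edist_eq_enorm_sub]
    exact hgL x y
  · have hvanish (y : E) : ‖g x - g y‖ₑ ^ 2 * levyDensity s (Iic η) (x - y) = 0 := by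
      by_cases hxy : ‖x - y‖ ≤ η
      · rw [mem_closedBall_zero_iff, not_le] at hx
        have hgx : g x = 0 := hgR x fun h => by
          linarith [norm_nonneg (x - y), mem_closedBall_zero_iff.1 h]
        have hgy : g y = 0 := hgR y fun h => by
          linarith [norm_le_norm_add_norm_sub' x y, mem_closedBall_zero_iff.1 h]
        simp [hgx, hgy]
      · rw [levyDensity_eq_zero hxy, mul_zero]
    simp only [carreDuChamp, hvanish, lintegral_zero, zero_le]

lemma carreDuChamp_Ici_le {G : ℝ≥0∞} (hgG : ∀ x, ‖g x‖ₑ ≤ G) {ρ : ℝ} (hs : 0 ≤ s) (hρ : 0 < ρ)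
    (hRρ : R ≤ ρ) (x : E) :
    carreDuChamp μ s (Ici (2 * ρ)) g x ≤ (2 * G) ^ 2 *
      ((closedBall 0 R).indicator (fun _ => ∫⁻ h, levyDensity s (Ici ρ) h ∂μ) x +
        μ (closedBall 0 R) * (ENNReal.ofReal (2 ^ s) * levyDensity s (Ici ρ) x)) := by
  have hlevy : Measurable (levyDensity (E := E) s (Ici (2 * ρ))) :=
    measurable_levyDensity measurableSet_Ici
  have hnear : ∫⁻ y, (closedBall 0 R).indicator 1 x * levyDensity s (Ici (2 * ρ)) (x - y) ∂μ ≤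
      (closedBall 0 R).indicator (fun _ => ∫⁻ h, levyDensity s (Ici ρ) h ∂μ) x := by
    by_cases hx : x ∈ closedBall 0 R
    · simp only [indicator_of_mem hx, Pi.one_apply, one_mul]
      rw [lintegral_sub_left_eq_self]
      exact lintegral_mono (levyDensity_mono (Ici_subset_Ici.2 (by linarith)))
    · simp only [indicator_of_notMem hx, zero_mul, lintegral_zero, le_refl]
  calc carreDuChamp μ s (Ici (2 * ρ)) g x
      ≤ ∫⁻ y, (2 * G) ^ 2 *
          ((closedBall 0 R).indicator 1 x * levyDensity s (Ici (2 * ρ)) (x - y) +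
            (closedBall 0 R).indicator 1 y * levyDensity s (Ici (2 * ρ)) (x - y)) ∂μ := by
        refine lintegral_mono fun y => ?_
        rw [← add_mul, ← mul_assoc]
        gcongr
        exact enorm_sub_sq_le_indicator hgR hgG x y
    _ ≤ _ := by
        have hball : Measurable ((closedBall (0 : E) R).indicator (1 : E → ℝ≥0∞)) :=
          measurable_one.indicator measurableSet_closedBall
        rw [lintegral_const_mul _ (by fun_prop), lintegral_add_left (by fun_prop)]
        gcongr
        exact lintegral_indicator_mul_levyDensity_sub_Ici_le hs hρ hRρ x

lemma lintegral_mul_carreDuChamp_Ici_le_add {V : E → ℝ≥0∞} (hV : Measurable V) {G : ℝ≥0∞}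
    (hgG : ∀ x, ‖g x‖ₑ ≤ G) {ρ : ℝ} (hs : 0 ≤ s) (hρ : 0 < ρ) (hRρ : R ≤ ρ) :
    ∫⁻ x, V x * carreDuChamp μ s (Ici (2 * ρ)) g x ∂μ ≤
      (2 * G) ^ 2 * ((∫⁻ x in closedBall 0 R, V x ∂μ) * ∫⁻ h, levyDensity s (Ici ρ) h ∂μ +
        μ (closedBall 0 R) * ENNReal.ofReal (2 ^ s) *
          ∫⁻ x, V x * levyDensity s (Ici ρ) x ∂μ) := by
  set W : ℝ≥0∞ := ∫⁻ h, levyDensity s (Ici ρ) h ∂μ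
  have hlevy : Measurable (levyDensity (E := E) s (Ici ρ)) :=
    measurable_levyDensity measurableSet_Ici
  have hball : MeasurableSet (closedBall (0 : E) R) := measurableSet_closedBall
  calc ∫⁻ x, V x * carreDuChamp μ s (Ici (2 * ρ)) g x ∂μ
      ≤ ∫⁻ x, (2 * G) ^ 2 * ((closedBall 0 R).indicator (fun x => V x * W) x +
          μ (closedBall 0 R) * ENNReal.ofReal (2 ^ s) * (V x * levyDensity s (Ici ρ) x)) ∂μ := by
        refine lintegral_mono fun x =>
          (mul_le_mul_right (carreDuChamp_Ici_le hgR hgG hs hρ hRρ x) _).trans_eq ?_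
        rw [indicator_mul_right]
        ring
    _ = _ := by
        rw [lintegral_const_mul _ (by fun_prop), lintegral_add_right _ (by fun_prop),
          lintegral_const_mul _ (by fun_prop), lintegral_indicator hball,
          lintegral_mul_const _ hV]

end CarreDuChamp

section Integrated

variable [MeasurableSpace E] [BorelSpace E] [NormedSpace ℝ E] [FiniteDimensional ℝ E]
  {μ : Measure E} [μ.IsAddHaarMeasure] {V : E → ℝ≥0∞} {M : ℝ≥0∞} {g : E → ℝ} {R : ℝ}

lemma BallAveragesLE.lintegral_mul_carreDuChamp_Iic_le (hV : Measurable V)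
    (hVM : BallAveragesLE μ V M) (hR : 0 ≤ R) (hgR : ∀ x ∉ closedBall 0 R, g x = 0)
    {L : ℝ≥0} (hgL : LipschitzWith L g) (s : ℝ) {η : ℝ} (hη : η ≤ 1) :
    ∫⁻ x, V x * carreDuChamp μ s (Iic η) g x ∂μ ≤
      M * μ (closedBall 0 (R + 1)) * (L ^ 2 * ∫⁻ h, ‖h‖ₑ ^ 2 * levyDensity s (Iic η) h ∂μ) := by
  set w : ℝ≥0∞ := L ^ 2 * ∫⁻ h, ‖h‖ₑ ^ 2 * levyDensity s (Iic η) h ∂μ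
  calc ∫⁻ x, V x * carreDuChamp μ s (Iic η) g x ∂μ
      ≤ ∫⁻ x, (closedBall 0 (R + 1)).indicator (fun x => V x * w) x ∂μ := by
        refine lintegral_mono fun x => ?_
        rw [indicator_mul_right]
        gcongr
        exact (carreDuChamp_Iic_le hgR hgL η x).trans (indicator_le_indicator_of_subset
          (closedBall_subset_closedBall (by gcongr)) (fun _ => zero_le) x)
    _ = (∫⁻ x in closedBall 0 (R + 1), V x ∂μ) * w := by
        rw [lintegral_indicator measurableSet_closedBall, lintegral_mul_const _ hV]
    _ ≤ M * μ (closedBall 0 (R + 1)) * w := by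
        gcongr
        exact hVM _ (by linarith)

lemma BallAveragesLE.lintegral_mul_carreDuChamp_Ici_le (hV : Measurable V)
    (hVM : BallAveragesLE μ V M) (hgR : ∀ x ∉ closedBall 0 R, g x = 0) {G : ℝ≥0∞}
    (hgG : ∀ x, ‖g x‖ₑ ≤ G) {α ρ : ℝ} (hα : 0 < α) (hR : 1 ≤ R) (hRρ : R ≤ ρ) :
    ∫⁻ x, V x * carreDuChamp μ (finrank ℝ E + α) (Ici (2 * ρ)) g x ∂μ ≤
      (2 * G) ^ 2 * (M * μ (closedBall 0 R) * (1 + ENNReal.ofReal (2 ^ (finrank ℝ E + α))) *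
        μ (closedBall 0 1)) * ENNReal.ofReal ((finrank ℝ E + α) / α * ρ ^ (-α)) := by
  have hρ : 1 ≤ ρ := hR.trans hRρ
  set p : ℝ := finrank ℝ E + α
  set T : ℝ≥0∞ := μ (closedBall 0 1) * ENNReal.ofReal (p / α * ρ ^ (-α)) with hT
  have htail : ∫⁻ h : E, levyDensity p (Ici ρ) h ∂μ ≤ T := by
    simpa only [Pi.one_apply, one_mul] using
      ballAveragesLE_one.lintegral_mul_levyDensity_Ici_le (μ := μ) measurable_one hα hρ
  have htailV : ∫⁻ x, V x * levyDensity p (Ici ρ) x ∂μ ≤ M * T := by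
    simpa only [T, mul_assoc] using hVM.lintegral_mul_levyDensity_Ici_le hV hα hρ
  calc ∫⁻ x, V x * carreDuChamp μ p (Ici (2 * ρ)) g x ∂μ
      ≤ (2 * G) ^ 2 * ((∫⁻ x in closedBall 0 R, V x ∂μ) * ∫⁻ h, levyDensity p (Ici ρ) h ∂μ +
          μ (closedBall 0 R) * ENNReal.ofReal (2 ^ p) *
            ∫⁻ x, V x * levyDensity p (Ici ρ) x ∂μ) :=
        lintegral_mul_carreDuChamp_Ici_le_add hgR hV hgG (by positivity) (by positivity) hRρ
    _ ≤ (2 * G) ^ 2 * (M * μ (closedBall 0 R) * T +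
          μ (closedBall 0 R) * ENNReal.ofReal (2 ^ p) * (M * T)) := by
        gcongr
        exact hVM R hR
    _ = _ := by
        rw [hT]
        ring

end Integrated

section Limits

lemma abs_limsup_le {ι : Type*} {l : Filter ι} [l.NeBot] {u : ι → ℝ} {c : ℝ}
    (hu : ∀ᶠ i in l, |u i| ≤ c) : |limsup u l| ≤ c := by
  have hlower : ∀ᶠ i in l, -c ≤ u i := hu.mono fun _ => neg_le_of_abs_le
  have hupper : ∀ᶠ i in l, u i ≤ c := hu.mono fun _ => le_of_abs_le
  exact abs_le.2 ⟨
    le_limsup_of_frequently_le hlower.frequently (isBoundedUnder_of_eventually_le hupper),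
    limsup_le_of_le (isCoboundedUnder_le_of_eventually_le l hlower) hupper⟩

lemma tendsto_limsup_zero_of_enorm_le {ι ι' : Type*} {l : Filter ι} {l' : Filter ι'} [l'.NeBot]
    {Φ : ι → ι' → ℝ} {C : ι → ℝ≥0∞} (hΦ : ∀ᶠ i in l, ∀ᶠ j in l', ‖Φ i j‖ₑ ≤ C i)
    (hC : Tendsto C l (𝓝 0)) : Tendsto (fun i => limsup (Φ i) l') l (𝓝 0) := by
  refine squeeze_zero_norm' ?_ ((ENNReal.tendsto_toReal ENNReal.zero_ne_top).comp hC)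
  filter_upwards [hΦ, hC.eventually_lt_const ENNReal.zero_lt_top] with i hi hCi
  refine abs_limsup_le (hi.mono fun j hj => ?_)
  simpa using ENNReal.toReal_mono hCi.ne hj

lemma enorm_sq_mul_levyDensity_Iic (s η : ℝ) (h : E) :
    ‖h‖ₑ ^ 2 * levyDensity s (Iic η) h =
      (closedBall 0 η).indicator (fun h => ‖‖h‖ ^ 2 * (‖h‖ ^ s)⁻¹‖ₑ) h := by
  by_cases hh : ‖h‖ ≤ η
  · rw [levyDensity, indicator_of_mem (mem_Iic.2 hh),
      indicator_of_mem (mem_closedBall_zero_iff.2 hh), enorm_mul, enorm_pow, enorm_norm,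
      Real.enorm_of_nonneg (by positivity)]
  · rw [levyDensity_eq_zero hh, mul_zero,
      indicator_of_notMem (mem_closedBall_zero_iff.not.2 hh)]

lemma tendsto_measure_closedBall_nhdsGT_zero [MeasurableSpace E] [OpensMeasurableSpace E]
    [ProperSpace E] {μ : Measure E} [IsFiniteMeasureOnCompacts μ] [NullSingletonClass μ] (x : E) :
    Tendsto (fun η => μ (closedBall x η)) (𝓝[>] 0) (𝓝 0) := by
  have hthick : Tendsto (fun η => μ (cthickening η {x})) (𝓝[>] 0) (𝓝 (μ {x})) :=
    (tendsto_measure_cthickening_of_isCompact isCompact_singleton).mono_left nhdsWithin_le_nhds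
  rw [measure_singleton] at hthick
  refine hthick.congr' (eventually_nhdsWithin_of_forall fun η hη => ?_)
  rw [cthickening_singleton x (mem_Ioi.1 hη).le]

variable [MeasurableSpace E] [BorelSpace E] [NormedSpace ℝ E] [FiniteDimensional ℝ E]
  {μ : Measure E} [μ.IsAddHaarMeasure]

lemma locallyIntegrable_norm_sq_mul_inv_norm_rpow [Nontrivial E] {α : ℝ} (hα : α < 2) :
    LocallyIntegrable (fun h : E => ‖h‖ ^ 2 * (‖h‖ ^ (finrank ℝ E + α))⁻¹) μ := by
  refine locallyIntegrable_of_norm_le_rpow (C := 1) (α := finrank ℝ E + α - 2)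
    Module.finrank_pos (by linarith) (.of_forall fun h => ?_) (by fun_prop)
  rcases (norm_nonneg h).eq_or_lt' with hh | hh
  · simp [hh, Real.rpow_nonneg]
  · rw [Real.norm_of_nonneg (by positivity), one_mul, ← Real.rpow_neg hh.le, ← Real.rpow_natCast,
      ← Real.rpow_add hh]
    apply le_of_eq
    congr 1
    push_cast
    ring

lemma tendsto_lintegral_enorm_sq_mul_levyDensity_Iic {α : ℝ} (hα : α < 2) :
    Tendsto (fun η => ∫⁻ h, ‖h‖ₑ ^ 2 * levyDensity (finrank ℝ E + α) (Iic η) h ∂μ)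
      (𝓝[>] 0) (𝓝 0) := by
  rcases subsingleton_or_nontrivial E with hE | hE
  · simp [Subsingleton.elim _ (0 : E)]
  let f : E → ℝ≥0∞ := fun h => ‖‖h‖ ^ 2 * (‖h‖ ^ (finrank ℝ E + α))⁻¹‖ₑ
  have hf : ∫⁻ h in closedBall (0 : E) 1, f h ∂μ ≠ ∞ :=
    ((locallyIntegrable_norm_sq_mul_inv_norm_rpow hα).integrableOn_isCompact
      (isCompact_closedBall 0 1)).hasFiniteIntegral.ne
  have hball : Tendsto (fun η => μ.restrict (closedBall 0 1) (closedBall (0 : E) η))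
      (𝓝[>] 0) (𝓝 0) := by
    refine tendsto_of_tendsto_of_tendsto_of_le_of_le tendsto_const_nhds
      (tendsto_measure_closedBall_nhdsGT_zero (μ := μ) 0) (fun _ => zero_le) fun _ => ?_
    exact Measure.restrict_apply_le _ _
  refine (tendsto_setLIntegral_zero hf hball).congr' ?_
  filter_upwards [Ioc_mem_nhdsGT one_pos] with η hη
  rw [Measure.restrict_restrict measurableSet_closedBall,
    inter_eq_left.2 (closedBall_subset_closedBall hη.2),
    ← lintegral_indicator measurableSet_closedBall]
  simp only [enorm_sq_mul_levyDensity_Iic, f]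

end Limits

section JumpLimits

lemma exists_one_le_forall_notMem_closedBall_eq_zero {g : E → ℝ} (hgc : HasCompactSupport g) :
    ∃ R, 1 ≤ R ∧ ∀ x ∉ closedBall 0 R, g x = 0 := by
  obtain ⟨R, hR⟩ := hgc.isCompact.isBounded.subset_closedBall 0
  refine ⟨max R 1, le_max_right _ _, fun x hx => image_eq_zero_of_notMem_tsupport fun h => hx ?_⟩
  exact closedBall_subset_closedBall (le_max_left _ _) (hR h)

variable [MeasurableSpace E] [BorelSpace E] [NormedSpace ℝ E] [FiniteDimensional ℝ E]
  {μ : Measure E} [μ.IsAddHaarMeasure] {V : E → ℝ≥0∞} {M : ℝ≥0∞} {κ : E → E → ℝ} {g : E → ℝ}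
  {L : ℝ≥0} {α : ℝ}

lemma BallAveragesLE.tendsto_limsup_jumpEnergy_Iic (hV : Measurable V) (hM : M ≠ ∞)
    (hVM : BallAveragesLE μ V M) (hκ : ∀ x y, ‖κ x y‖ₑ ≤ V x + V y) (hα : α < 2)
    (hgL : LipschitzWith L g) (hgc : HasCompactSupport g) :
    Tendsto (fun η => limsup (fun ε : ℝ => jumpEnergy μ (finrank ℝ E + α) (Iic η) g
      fun x y => κ (ε⁻¹ • x) (ε⁻¹ • y)) (𝓝[>] 0)) (𝓝[>] 0) (𝓝 0) := by
  obtain ⟨R, hR, hgR⟩ := exists_one_le_forall_notMem_closedBall_eq_zero hgc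
  let w : ℝ → ℝ≥0∞ := fun η => ∫⁻ h, ‖h‖ₑ ^ 2 * levyDensity (finrank ℝ E + α) (Iic η) h ∂μ
  have hw : Tendsto (fun η => 2 * (M * μ (closedBall 0 (R + 1)) * (L ^ 2 * w η))) (𝓝[>] 0)
      (𝓝 0) := by
    have hconst : 2 * (M * μ (closedBall 0 (R + 1)) * L ^ 2) ≠ ∞ := by
      have : μ (closedBall 0 (R + 1)) ≠ ∞ := measure_closedBall_lt_top.ne
      finiteness
    simpa only [mul_zero, mul_assoc] using ENNReal.Tendsto.const_mul
      (tendsto_lintegral_enorm_sq_mul_levyDensity_Iic (μ := μ) hα) (.inr hconst)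
  refine tendsto_limsup_zero_of_enorm_le ?_ hw
  filter_upwards [Ioc_mem_nhdsGT one_pos] with η hη
  filter_upwards [Ioc_mem_nhdsGT one_pos] with ε hε
  refine (enorm_jumpEnergy_le measurableSet_Iic hgL.continuous.measurable
    (hV.comp (measurable_const_smul ε⁻¹)) fun x y => hκ _ _).trans ?_
  gcongr
  exact (hVM.comp_smul ((one_le_inv₀ hε.1).2 hε.2)).lintegral_mul_carreDuChamp_Iic_le
    (hV.comp (measurable_const_smul ε⁻¹)) (by positivity) hgR hgL _ hη.2

lemma BallAveragesLE.tendsto_limsup_jumpEnergy_Ici (hV : Measurable V) (hM : M ≠ ∞)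
    (hVM : BallAveragesLE μ V M) (hκ : ∀ x y, ‖κ x y‖ₑ ≤ V x + V y) (hα : 0 < α)
    (hg : Continuous g) (hgc : HasCompactSupport g) :
    Tendsto (fun r => limsup (fun ε : ℝ => jumpEnergy μ (finrank ℝ E + α) (Ici r) g
      fun x y => κ (ε⁻¹ • x) (ε⁻¹ • y)) (𝓝[>] 0)) atTop (𝓝 0) := by
  obtain ⟨R, hR, hgR⟩ := exists_one_le_forall_notMem_closedBall_eq_zero hgc
  obtain ⟨G, hG⟩ := hgc.exists_bound_of_continuous hg
  have hgG (x : E) : ‖g x‖ₑ ≤ ENNReal.ofReal G := by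
    rw [← ofReal_norm]
    exact ENNReal.ofReal_le_ofReal (hG x)
  set p : ℝ := finrank ℝ E + α
  set A : ℝ≥0∞ := (2 * ENNReal.ofReal G) ^ 2 *
    (M * μ (closedBall 0 R) * (1 + ENNReal.ofReal (2 ^ p)) * μ (closedBall 0 1))
  have hA : A ≠ ∞ := by
    have hball (r : ℝ) : μ (closedBall 0 r) ≠ ∞ := measure_closedBall_lt_top.ne
    finiteness [hball R, hball 1]
  have htail : Tendsto (fun r : ℝ => 2 * (A * ENNReal.ofReal (p / α * (r / 2) ^ (-α)))) atTop
      (𝓝 0) := by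
    have hrpow : Tendsto (fun r : ℝ => p / α * (r / 2) ^ (-α)) atTop (𝓝 0) := by
      simpa only [mul_zero, Function.comp_def, id_eq] using ((tendsto_rpow_neg_atTop hα).comp
        (tendsto_id.atTop_div_const two_pos)).const_mul (p / α)
    have hofReal := ENNReal.tendsto_ofReal hrpow
    rw [ENNReal.ofReal_zero] at hofReal
    simpa only [mul_zero, mul_assoc] using
      ENNReal.Tendsto.const_mul (a := 2 * A) hofReal (.inr (by finiteness))
  refine tendsto_limsup_zero_of_enorm_le ?_ htail
  filter_upwards [eventually_ge_atTop (2 * R)] with r hr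
  filter_upwards [Ioc_mem_nhdsGT one_pos] with ε hε
  refine (enorm_jumpEnergy_le measurableSet_Ici hg.measurable
    (hV.comp (measurable_const_smul ε⁻¹)) fun x y => hκ _ _).trans ?_
  gcongr
  nth_rw 1 [← mul_div_cancel₀ r two_ne_zero]
  exact (hVM.comp_smul ((one_le_inv₀ hε.1).2 hε.2)).lintegral_mul_carreDuChamp_Ici_le
    (hV.comp (measurable_const_smul ε⁻¹)) hgR hgG hα hR (by linarith)

end JumpLimits

theorem small_and_large_jumps_negligible_general [MeasurableSpace E] [BorelSpace E]
    [NormedSpace ℝ E] [FiniteDimensional ℝ E] (μ : Measure E) [μ.IsAddHaarMeasure]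
    {Ω : Type*} [MeasurableSpace Ω] [AddAction E Ω] [MeasurableVAdd₂ E Ω] (ℙ : Measure Ω)
    [SFinite ℙ] [VAddInvariantMeasure E Ω ℙ] {α : ℝ} (hα0 : 0 < α) (hα2 : α < 2)
    {κ : E → E → Ω → ℝ} (_hκ_meas : Measurable fun p : E × E × Ω => κ p.1 p.2.1 p.2.2)
    {Λ : Ω → ℝ≥0∞} (hΛ : Measurable Λ) (hΛ_fin : ∫⁻ ω, Λ ω ∂ℙ ≠ ∞)
    (hκ : ∀ᵐ ω ∂ℙ, ∀ x y, ‖κ x y ω‖ₑ ≤ Λ (x +ᵥ ω) + Λ (y +ᵥ ω)) :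
    ∀ᵐ ω ∂ℙ, ∀ (g : E → ℝ) (L : ℝ≥0), LipschitzWith L g → HasCompactSupport g →
      Tendsto (fun η => limsup (fun ε : ℝ => jumpEnergy μ (finrank ℝ E + α) (Iic η) g
        fun x y => κ (ε⁻¹ • x) (ε⁻¹ • y) ω) (𝓝[>] 0)) (𝓝[>] 0) (𝓝 0) ∧
      Tendsto (fun r => limsup (fun ε : ℝ => jumpEnergy μ (finrank ℝ E + α) (Ici r) g
        fun x y => κ (ε⁻¹ • x) (ε⁻¹ • y) ω) (𝓝[>] 0)) atTop (𝓝 0) := by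
  filter_upwards [hκ, ae_exists_ballAveragesLE_orbit (μ := μ) hΛ hΛ_fin] with ω hκω hω g L hgL hgc
  obtain ⟨M, hM, hVM⟩ := hω
  have hV : Measurable fun x : E => Λ (x +ᵥ ω) := hΛ.comp (measurable_vadd_const ω)
  exact ⟨hVM.tendsto_limsup_jumpEnergy_Iic (κ := fun x y => κ x y ω) hV hM hκω hα2 hgL hgc,
    hVM.tendsto_limsup_jumpEnergy_Ici (κ := fun x y => κ x y ω) hV hM hκω hα0 hgL.continuous hgc⟩

end NormedGroup

/-- If `κ(x,y;ω) ≤ Λ₂(τ_x ω) + Λ₂(τ_y ω)` with `𝔼[Λ₂] < ∞`, then almost surely, for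
every `g ∈ C_c¹(ℝ^d)`, the contribution of very small and very large jumps to the
scaled energy of `g` vanishes in the iterated limit `ε → 0`, `η → 0`. -/
theorem small_and_large_jumps_negligible
    {Ω : Type*} [MeasurableSpace Ω] (ℙ : Measure Ω) [IsProbabilityMeasure ℙ]
    (d : ℕ) (hd : 0 < d) (α : ℝ) (hα0 : 0 < α) (hα2 : α < 2)
    -- the stationary ergodic group of transformations
    (τ : Rd d → Ω → Ω)
    (hτ0 : τ 0 = id)
    (hτadd : ∀ x y, τ x ∘ τ y = τ (x + y))
    (hτmeas : Measurable fun p : Rd d × Ω => τ p.1 p.2)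
    (hτstat : ∀ x, MeasurePreserving (τ x) ℙ ℙ)
    (hτerg : ∀ A : Set Ω, MeasurableSet A → (∀ x, τ x ⁻¹' A = A) → ℙ A = 0 ∨ ℙ A = 1)
    -- the coefficient κ
    (κ : Rd d → Rd d → Ω → ℝ)
    (hκmeas : Measurable fun p : Rd d × Rd d × Ω => κ p.1 p.2.1 p.2.2)
    (hκnn : ∀ x y ω, 0 ≤ κ x y ω)
    (hκsym : ∀ x y ω, κ x y ω = κ y x ω)
    (hκshift : ∀ x y z ω, κ (x + z) (y + z) ω = κ x y (τ z ω))
    -- the dominating random variable Λ₂ with 𝔼[Λ₂] < ∞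
    (Λ₂ : Ω → ℝ) (hΛmeas : Measurable Λ₂) (hΛnn : ∀ ω, 0 ≤ Λ₂ ω)
    (hΛint : Integrable Λ₂ ℙ)
    (hκbound : ∀ᵐ ω ∂ℙ, ∀ x y : Rd d, κ x y ω ≤ Λ₂ (τ x ω) + Λ₂ (τ y ω)) :
    ∃ Ω₁ : Set Ω, MeasurableSet Ω₁ ∧ ℙ Ω₁ = 1 ∧
      ∀ ω ∈ Ω₁, ∀ g : Rd d → ℝ, ContDiff ℝ 1 g → HasCompactSupport g →
        Tendsto (fun η : ℝ =>
            limsup (fun ε : ℝ =>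
              ∫ p in {p : Rd d × Rd d | ‖p.1 - p.2‖ ≤ η},
                (g p.1 - g p.2) ^ 2 * κ (ε⁻¹ • p.1) (ε⁻¹ • p.2) ω
                  / ‖p.1 - p.2‖ ^ ((d : ℝ) + α)) (𝓝[>] (0 : ℝ)))
          (𝓝[>] (0 : ℝ)) (𝓝 0) ∧
        Tendsto (fun η : ℝ =>
            limsup (fun ε : ℝ =>
              ∫ p in {p : Rd d × Rd d | 1 / η ≤ ‖p.1 - p.2‖},
                (g p.1 - g p.2) ^ 2 * κ (ε⁻¹ • p.1) (ε⁻¹ • p.2) ω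
                  / ‖p.1 - p.2‖ ^ ((d : ℝ) + α)) (𝓝[>] (0 : ℝ)))
          (𝓝[>] (0 : ℝ)) (𝓝 0) := by
  let : AddAction (Rd d) Ω :=
    { vadd := τ
      zero_vadd := congrFun hτ0
      add_vadd := fun x y ω => (congrFun (hτadd x y) ω).symm }
  have : MeasurableVAdd₂ (Rd d) Ω := ⟨hτmeas⟩
  have : VAddInvariantMeasure (Rd d) Ω ℙ :=
    ⟨fun x s hs => (hτstat x).measure_preimage hs.nullMeasurableSet⟩
  have hκΛ : ∀ᵐ ω ∂ℙ, ∀ x y : Rd d, ‖κ x y ω‖ₑ ≤ ‖Λ₂ (x +ᵥ ω)‖ₑ + ‖Λ₂ (y +ᵥ ω)‖ₑ :=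
    hκbound.mono fun ω hω x y =>
      calc ‖κ x y ω‖ₑ = ENNReal.ofReal (κ x y ω) := Real.enorm_of_nonneg (hκnn x y ω)
        _ ≤ ENNReal.ofReal (Λ₂ (x +ᵥ ω) + Λ₂ (y +ᵥ ω)) := ENNReal.ofReal_le_ofReal (hω x y)
        _ ≤ ‖Λ₂ (x +ᵥ ω)‖ₑ + ‖Λ₂ (y +ᵥ ω)‖ₑ := (Real.ofReal_le_enorm _).trans (enorm_add_le _ _)
  obtain ⟨Ω₁, hΩ₁, hΩ₁m, hlim⟩ := (small_and_large_jumps_negligible_general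
    (volume : Measure (Rd d)) ℙ hα0 hα2 hκmeas hΛmeas.enorm hΛint.2.ne hκΛ).exists_measurable_mem
  refine ⟨Ω₁, hΩ₁m, (mem_ae_iff_prob_eq_one hΩ₁m).1 hΩ₁, fun ω hω g hg hgc => ?_⟩
  obtain ⟨L, hgL⟩ := hg.lipschitzWith_of_hasCompactSupport hgc (by norm_num)
  obtain ⟨hsmall, hlarge⟩ := hlim ω hω g L hgL hgc
  rw [finrank_euclideanSpace_fin] at hsmall hlarge
  exact ⟨hsmall, hlarge.comp (tendsto_inv_nhdsGT_zero.congr fun η => (one_div η).symm)⟩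

end
end

section
/- Suppose there is a non-negative random variable Λ₂ on Ω with 𝔼[Λ₂] < ∞ such that for ℙ-a.e. ω: κ(x,y;ω) ≤ Λ₂(τ_x ω)·Λ₂(τ_y ω) for all x,y ∈ ℝ^d, and the function x ↦ Λ₂(τ_x ω) is locally bounded on ℝ^d. Then for ℙ-a.e. ω and every R ≥ 1: ∫_{B(0,R)} ∫_{ℝ^d} (1 ∧ |z|²)·κ(x,x+z;ω)·|z|^{−(d+α)} dz dx < ∞. -/
open MeasureTheory Filter Metric Set
open scoped ENNReal Topology

noncomputable section

/-! Split the inner integral at `‖z‖ = 1`. For `‖z‖ < 1` the kernel `κ` is locally bounded and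
`‖z‖ ^ 2 / ‖z‖ ^ s` is integrable, since `s < dim + 2`. For `1 ≤ ‖z‖` the weight is `‖z‖ ^ (-s)`,
which at the endpoint `y = x + z` is comparable to `(1 + ‖y‖) ^ (-s)`, locally uniformly in `x`.
By stationarity and Tonelli, `∫ Λ (τ_y ω) (1 + ‖y‖) ^ (-s) dy` has expectation
`𝔼[Λ] ∫ (1 + ‖y‖) ^ (-s) dy`, which is finite because `dim < s`; so it is almost surely finite. -/

section LevyWeight

variable {E : Type*} [NormedAddCommGroup E]

/-- The density `(1 ∧ ‖z‖²) ‖z‖ ^ (-s)` of a stable-like Lévy measure (of index `α` when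
`s = dim + α`), damped near the origin. It is `ℝ≥0∞`-valued for use in `∫⁻`, and equals `0` at
`z = 0` for every `s`. -/
def levyWeight (s : ℝ) (z : E) : ℝ≥0∞ :=
  ENNReal.ofReal (min 1 (‖z‖ ^ 2) / ‖z‖ ^ s)

@[fun_prop]
theorem measurable_levyWeight [MeasurableSpace E] [OpensMeasurableSpace E] (s : ℝ) :
    Measurable (levyWeight s : E → ℝ≥0∞) := by
  unfold levyWeight
  fun_prop

theorem setLIntegral_ball_levyWeight_lt_top [NormedSpace ℝ E] [FiniteDimensional ℝ E] [Nontrivial E]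
    [MeasurableSpace E] [BorelSpace E] (μ : Measure E) [μ.IsAddHaarMeasure] {s : ℝ}
    (hs : s < Module.finrank ℝ E + 2) (r : ℝ) :
    ∫⁻ z in ball (0 : E) r, levyWeight s z ∂μ < ∞ := by
  have weight_le (z : E) : ‖min 1 (‖z‖ ^ 2) / ‖z‖ ^ s‖ ≤ 1 * ‖z‖ ^ (-(s - 2)) := by
    rw [Real.norm_of_nonneg (by positivity), one_mul]
    rcases eq_or_ne z 0 with rfl | hz
    · rw [norm_zero, zero_pow two_ne_zero, min_eq_right zero_le_one, zero_div]
      positivity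
    · rw [neg_sub, Real.rpow_sub (norm_pos_iff.mpr hz), Real.rpow_two]
      gcongr
      exact min_le_right _ _
  exact (integrableOn_ball_of_norm_le_rpow Module.finrank_pos (by linarith)
    (ae_of_all _ weight_le) (Measurable.aestronglyMeasurable (by fun_prop))).lintegral_lt_top

theorem levyWeight_le_of_one_le_norm {s : ℝ} (hs : 0 ≤ s) (x : E) {z : E} (hz : 1 ≤ ‖z‖) :
    levyWeight s z ≤
      ENNReal.ofReal ((2 + ‖x‖) ^ s) * ENNReal.ofReal ((1 + ‖x + z‖) ^ (-s)) := by
  have norm_comparison : (1 + ‖x + z‖) / (2 + ‖x‖) ≤ ‖z‖ := by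
    rw [div_le_iff₀ (by positivity)]
    nlinarith [norm_add_le x z, norm_nonneg x]
  rw [← ENNReal.ofReal_mul (by positivity)]
  refine ENNReal.ofReal_le_ofReal ?_
  calc min 1 (‖z‖ ^ 2) / ‖z‖ ^ s
      ≤ 1 / ‖z‖ ^ s := by gcongr; exact min_le_left _ _
    _ = ‖z‖ ^ (-s) := by rw [one_div, Real.rpow_neg (norm_nonneg z)]
    _ ≤ ((1 + ‖x + z‖) / (2 + ‖x‖)) ^ (-s) :=
        Real.rpow_le_rpow_of_nonpos (by positivity) norm_comparison (neg_nonpos.mpr hs)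
    _ = (2 + ‖x‖) ^ s * (1 + ‖x + z‖) ^ (-s) := by
        rw [Real.div_rpow (by positivity) (by positivity), Real.rpow_neg (by positivity) s,
          Real.rpow_neg (by positivity) s, div_inv_eq_mul, mul_comm]

variable [MeasurableSpace E] [BorelSpace E]

theorem lintegral_translate_mul_levyWeight_le (μ : Measure E) [μ.IsAddLeftInvariant]
    {s : ℝ} (hs : 0 ≤ s) {f : E → ℝ≥0∞} {x : E} {M : ℝ≥0∞} (hf : ∀ y ∈ ball x 1, f y ≤ M) :
    ∫⁻ z, f (x + z) * levyWeight s z ∂μ ≤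
      M * ∫⁻ z in ball (0 : E) 1, levyWeight s z ∂μ +
        ENNReal.ofReal ((2 + ‖x‖) ^ s) * ∫⁻ y, f y * ENNReal.ofReal ((1 + ‖y‖) ^ (-s)) ∂μ := by
  rw [← lintegral_add_compl _ (measurableSet_ball : MeasurableSet (ball (0 : E) 1))]
  gcongr
  · rw [← lintegral_const_mul M (measurable_levyWeight s)]
    refine setLIntegral_mono' measurableSet_ball fun z hz => ?_
    gcongr
    exact hf _ (by simpa using hz)
  · rw [← lintegral_add_left_eq_self (μ := μ) _ x, ← lintegral_const_mul' _ _ ENNReal.ofReal_ne_top]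
    refine (setLIntegral_mono' measurableSet_ball.compl fun z hz => ?_).trans
      (setLIntegral_le_lintegral _ _)
    rw [mul_left_comm]
    gcongr
    exact levyWeight_le_of_one_le_norm hs x (by simpa using hz)

theorem setLIntegral_ball_mul_lintegral_levyWeight_lt_top [NormedSpace ℝ E] [FiniteDimensional ℝ E]
    [Nontrivial E] (μ : Measure E) [μ.IsAddHaarMeasure] {s : ℝ} (hs0 : 0 ≤ s)
    (hs2 : s < Module.finrank ℝ E + 2) {f : E → ℝ≥0∞} {R : ℝ} {M : ℝ≥0∞} (hM : M ≠ ∞)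
    (hfM : ∀ y ∈ ball (0 : E) (R + 1), f y ≤ M)
    (hf : ∫⁻ y, f y * ENNReal.ofReal ((1 + ‖y‖) ^ (-s)) ∂μ ≠ ∞) :
    ∫⁻ x in ball (0 : E) R, f x * ∫⁻ z, f (x + z) * levyWeight s z ∂μ ∂μ < ∞ := by
  set near := ∫⁻ z in ball (0 : E) 1, levyWeight s z ∂μ
  set far := ∫⁻ y, f y * ENNReal.ofReal ((1 + ‖y‖) ^ (-s)) ∂μ
  have near_ne_top : near ≠ ∞ := (setLIntegral_ball_levyWeight_lt_top μ hs2 1).ne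
  have integrand_le : ∀ x ∈ ball (0 : E) R, f x * ∫⁻ z, f (x + z) * levyWeight s z ∂μ ≤
      M * (M * near + ENNReal.ofReal ((2 + R) ^ s) * far) := by
    intro x hx
    have hxR : ‖x‖ < R := mem_ball_zero_iff.mp hx
    have ball_subset : ball x 1 ⊆ ball 0 (R + 1) :=
      ball_subset_ball' (by rw [dist_zero_right]; linarith)
    grw [lintegral_translate_mul_levyWeight_le μ hs0 fun y hy => hfM y (ball_subset hy),
      hfM x (ball_subset (mem_ball_self one_pos)), hxR]
  calc ∫⁻ x in ball (0 : E) R, f x * ∫⁻ z, f (x + z) * levyWeight s z ∂μ ∂μ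
      ≤ ∫⁻ _ in ball (0 : E) R, M * (M * near + ENNReal.ofReal ((2 + R) ^ s) * far) ∂μ :=
        setLIntegral_mono' measurableSet_ball integrand_le
    _ = M * (M * near + ENNReal.ofReal ((2 + R) ^ s) * far) * μ (ball 0 R) :=
        setLIntegral_const _ _
    _ < ∞ := by finiteness

end LevyWeight

theorem ae_lintegral_comp_mul_lt_top {X Ω : Type*} [MeasurableSpace X] [MeasurableSpace Ω]
    {μ : Measure X} [SFinite μ] {ℙ : Measure Ω} [SFinite ℙ] {τ : X → Ω → Ω}
    (hτmeas : Measurable fun p : X × Ω => τ p.1 p.2) (hτ : ∀ x, MeasurePreserving (τ x) ℙ ℙ)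
    {f : Ω → ℝ≥0∞} (hf : Measurable f) (hfint : ∫⁻ ω, f ω ∂ℙ ≠ ∞)
    {w : X → ℝ≥0∞} (hw : Measurable w) (hwint : ∫⁻ x, w x ∂μ ≠ ∞) :
    ∀ᵐ ω ∂ℙ, ∫⁻ x, f (τ x ω) * w x ∂μ < ∞ := by
  have hmeas : Measurable fun p : Ω × X => f (τ p.2 p.1) * w p.2 :=
    (hf.comp (hτmeas.comp measurable_swap)).mul (hw.comp measurable_snd)
  have expectation_eq :
      ∫⁻ ω, ∫⁻ x, f (τ x ω) * w x ∂μ ∂ℙ = (∫⁻ ω, f ω ∂ℙ) * ∫⁻ x, w x ∂μ := by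
    rw [lintegral_lintegral_swap hmeas.aemeasurable, ← lintegral_const_mul _ hw]
    refine lintegral_congr fun x => ?_
    have hfτ : Measurable fun ω => f (τ x ω) := hf.comp (hτ x).measurable
    rw [lintegral_mul_const _ hfτ, (hτ x).lintegral_comp hf]
  refine ae_lt_top hmeas.lintegral_prod_right' ?_
  rw [expectation_eq]
  finiteness

theorem local_integrability_of_jump_kernel_general
    {E : Type*} [NormedAddCommGroup E] [NormedSpace ℝ E] [FiniteDimensional ℝ E] [Nontrivial E]
    [MeasurableSpace E] [BorelSpace E] (μ : Measure E) [μ.IsAddHaarMeasure]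
    {Ω : Type*} [MeasurableSpace Ω] (ℙ : Measure Ω) [SFinite ℙ]
    {s : ℝ} (hs : Module.finrank ℝ E < s) (hs2 : s < Module.finrank ℝ E + 2)
    {τ : E → Ω → Ω} (hτmeas : Measurable fun p : E × Ω => τ p.1 p.2)
    (hτstat : ∀ x, MeasurePreserving (τ x) ℙ ℙ)
    {κ : E → E → Ω → ℝ} (hκnn : ∀ x y ω, 0 ≤ κ x y ω)
    {Λ : Ω → ℝ} (hΛmeas : Measurable Λ) (hΛnn : ∀ ω, 0 ≤ Λ ω) (hΛint : Integrable Λ ℙ)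
    (hκbound : ∀ᵐ ω ∂ℙ, (∀ x y, κ x y ω ≤ Λ (τ x ω) * Λ (τ y ω)) ∧
      ∀ R : ℝ, 0 < R → ∃ M, ∀ x ∈ ball (0 : E) R, Λ (τ x ω) ≤ M) :
    ∀ᵐ ω ∂ℙ, ∀ R : ℝ, 0 < R →
      ∫⁻ x in ball (0 : E) R, ∫⁻ z,
        ENNReal.ofReal (min 1 (‖z‖ ^ 2) * κ x (x + z) ω / ‖z‖ ^ s) ∂μ ∂μ < ∞ := by
  have far_lt_top := ae_lintegral_comp_mul_lt_top (μ := μ) hτmeas hτstat hΛmeas.ennreal_ofReal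
    hΛint.lintegral_lt_top.ne (w := fun y => ENNReal.ofReal ((1 + ‖y‖) ^ (-s))) (by fun_prop)
    (finite_integral_one_add_norm hs).ne
  filter_upwards [hκbound, far_lt_top] with ω ⟨hκ, hloc⟩ hfar R hR
  obtain ⟨M, hM⟩ := hloc (R + 1) (by linarith)
  set f : E → ℝ≥0∞ := fun y => ENNReal.ofReal (Λ (τ y ω))
  have integrand_le (x z : E) :
      ENNReal.ofReal (min 1 (‖z‖ ^ 2) * κ x (x + z) ω / ‖z‖ ^ s) ≤
        f x * (f (x + z) * levyWeight s z) := by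
    rw [mul_comm (min 1 _), mul_div_assoc, ENNReal.ofReal_mul (hκnn x (x + z) ω), ← mul_assoc,
      ← ENNReal.ofReal_mul (hΛnn _)]
    exact mul_le_mul_left (ENNReal.ofReal_le_ofReal (hκ x (x + z))) _
  calc ∫⁻ x in ball (0 : E) R, ∫⁻ z,
        ENNReal.ofReal (min 1 (‖z‖ ^ 2) * κ x (x + z) ω / ‖z‖ ^ s) ∂μ ∂μ
      ≤ ∫⁻ x in ball (0 : E) R, ∫⁻ z, f x * (f (x + z) * levyWeight s z) ∂μ ∂μ := by
        gcongr with x z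
        exact integrand_le x z
    _ = ∫⁻ x in ball (0 : E) R, f x * ∫⁻ z, f (x + z) * levyWeight s z ∂μ ∂μ :=
        lintegral_congr fun x => lintegral_const_mul' _ _ ENNReal.ofReal_ne_top
    _ < ∞ := setLIntegral_ball_mul_lintegral_levyWeight_lt_top μ
        ((Nat.cast_nonneg _).trans hs.le) hs2 ENNReal.ofReal_ne_top
        (fun y hy => ENNReal.ofReal_le_ofReal (hM y hy)) hfar.ne

/-- **Remark 1.6.**  If `κ(x,y;ω) ≤ Λ₂(τ_x ω)Λ₂(τ_y ω)` with `𝔼[Λ₂] < ∞` and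
`x ↦ Λ₂(τ_x ω)` locally bounded, then almost surely
`∫_{B(0,R)} ∫ (1 ∧ |z|²) κ(x,x+z;ω) |z|^{-(d+α)} dz dx < ∞` for every `R ≥ 1`. -/
theorem local_integrability_of_jump_kernel
    {Ω : Type*} [MeasurableSpace Ω] (ℙ : Measure Ω) [IsProbabilityMeasure ℙ]
    (d : ℕ) (hd : 0 < d) (α : ℝ) (hα0 : 0 < α) (hα2 : α < 2)
    -- the stationary ergodic group of transformations
    (τ : Rd d → Ω → Ω)
    (hτ0 : τ 0 = id)
    (hτadd : ∀ x y, τ x ∘ τ y = τ (x + y))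
    (hτmeas : Measurable fun p : Rd d × Ω => τ p.1 p.2)
    (hτstat : ∀ x, MeasurePreserving (τ x) ℙ ℙ)
    (hτerg : ∀ A : Set Ω, MeasurableSet A → (∀ x, τ x ⁻¹' A = A) → ℙ A = 0 ∨ ℙ A = 1)
    -- the coefficient κ
    (κ : Rd d → Rd d → Ω → ℝ)
    (hκmeas : Measurable fun p : Rd d × Rd d × Ω => κ p.1 p.2.1 p.2.2)
    (hκnn : ∀ x y ω, 0 ≤ κ x y ω)
    (hκsym : ∀ x y ω, κ x y ω = κ y x ω)
    (hκshift : ∀ x y z ω, κ (x + z) (y + z) ω = κ x y (τ z ω))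
    -- the dominating random variable Λ₂ with 𝔼[Λ₂] < ∞
    (Λ₂ : Ω → ℝ) (hΛmeas : Measurable Λ₂) (hΛnn : ∀ ω, 0 ≤ Λ₂ ω)
    (hΛint : Integrable Λ₂ ℙ)
    (hκbound : ∀ᵐ ω ∂ℙ,
      (∀ x y : Rd d, κ x y ω ≤ Λ₂ (τ x ω) * Λ₂ (τ y ω)) ∧
      (∀ R : ℝ, 0 < R → ∃ M, ∀ x ∈ ball (0 : Rd d) R, Λ₂ (τ x ω) ≤ M)) :
    ∀ᵐ ω ∂ℙ, ∀ R : ℝ, 1 ≤ R →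
      (∫⁻ x in ball (0 : Rd d) R, ∫⁻ z : Rd d,
        ENNReal.ofReal
          (min 1 (‖z‖ ^ 2) * κ x (x + z) ω / ‖z‖ ^ ((d : ℝ) + α))) < ∞ := by
  have : Nonempty (Fin d) := ⟨⟨0, hd⟩⟩
  filter_upwards [local_integrability_of_jump_kernel_general volume ℙ (s := d + α)
    (by simpa using hα0) (by simpa using hα2) hτmeas hτstat hκnn hΛmeas hΛnn hΛint hκbound]
    with ω hω R hR using hω R (by linarith)

end
end
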